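/- arXiv:2503.11463 — 15 statements merged into one kernel-verified Lean document; each statement's English description precedes it below -/
import Mathlib

section
/- Let n ≥ 1, let σ be a permutation of [n] = {1,…,n}, and let P : [n] → ℕ be a pile assignment. Then P sorts σ on queues if and only if for every s ∈ [n−1]: P(s+1) ≥ P(s) + 1 whenever σ(s+1) < σ(s), and P(s+1) ≥ P(s) whenever σ(s+1) > σ(s). -/
/-!
Both conditions say that `s ↦ (P s, σ s)` is strictly increasing for the lexicographic order.
The local condition is strict increase at consecutive labels (`σ` is injective, so
`σ s ≠ σ (s + 1)`). By transitivity this gives `s < t → (P s, σ s) < (P t, σ t)` for all labels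
(`lex_of_step`), and the converse implication follows from trichotomy of `<` on labels together
with asymmetry of the lexicographic order.
-/

/-- `P` sorts `σ` on queues: for all `s, t ∈ [n]`,
`s < t` iff `(P s, σ s)` is lexicographically less than `(P t, σ t)`. -/
def SortsOnQueues (n : ℕ) (σ P : ℕ → ℕ) : Prop :=
  ∀ s ∈ Finset.Icc 1 n, ∀ t ∈ Finset.Icc 1 n,
    (s < t ↔ P s < P t ∨ (P s = P t ∧ σ s < σ t))

/-- Strict lexicographic increase at consecutive labels propagates to all pairs of labels. -/
theorem lex_of_step (n : ℕ) (σ P : ℕ → ℕ)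
    (h : ∀ s, 1 ≤ s → s + 1 ≤ n →
      P s < P (s + 1) ∨ (P s = P (s + 1) ∧ σ s < σ (s + 1)))
    (s t : ℕ) (hs : 1 ≤ s) (hst : s < t) (ht : t ≤ n) :
    P s < P t ∨ (P s = P t ∧ σ s < σ t) := by
  induction t, hst using Nat.le_induction with
  | base => exact h s hs ht
  | succ t hst ih =>
    have h1 := ih (by omega)
    have h2 := h t (by omega) ht
    omega

theorem stmt_0 (n : ℕ) (hn : 1 ≤ n) (σ : ℕ → ℕ)
    (hσ : Set.BijOn σ (Set.Icc 1 n) (Set.Icc 1 n)) (P : ℕ → ℕ) :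
    SortsOnQueues n σ P ↔
      ∀ s ∈ Finset.Icc 1 (n - 1),
        (σ (s + 1) < σ s → P s + 1 ≤ P (s + 1)) ∧
        (σ s < σ (s + 1) → P s ≤ P (s + 1)) := by
  constructor
  · intro h s hs
    rw [Finset.mem_Icc] at hs
    have h1 := (h s (by rw [Finset.mem_Icc]; omega) (s + 1)
      (by rw [Finset.mem_Icc]; omega)).1 (by omega)
    omega
  · intro h
    have step : ∀ s, 1 ≤ s → s + 1 ≤ n →
        P s < P (s + 1) ∨ (P s = P (s + 1) ∧ σ s < σ (s + 1)) := by
      intro s hs hsn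
      have h1 := h s (by rw [Finset.mem_Icc]; omega)
      have hne : σ s ≠ σ (s + 1) := by
        intro he
        have := hσ.injOn (show s ∈ Set.Icc 1 n from ⟨hs, by omega⟩)
          (show s + 1 ∈ Set.Icc 1 n from ⟨by omega, hsn⟩) he
        omega
      omega
    intro s hs t ht
    rw [Finset.mem_Icc] at hs ht
    refine ⟨fun hst => lex_of_step n σ P step s t hs.1 hst ht.2, fun hlex => ?_⟩
    rcases lt_trichotomy s t with hst | rfl | hts
    · exact hst
    · omega
    · have := lex_of_step n σ P step t s ht.1 hts hs.2
      omega
end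

section
/- Let n ≥ 1, let σ be a permutation of [n], and suppose P : [n] → ℕ sorts σ on queues with P(1) = 1. Then the number of piles used satisfies P(n) ≥ 1 + desc(σ). -/
/-- The number of descents of `σ`, `|{s ∈ [n−1] : σ(s+1) < σ(s)}|`. -/
def descents (n : ℕ) (σ : ℕ → ℕ) : ℕ :=
  ((Finset.Icc 1 (n - 1)).filter (fun s => σ (s + 1) < σ s)).card

theorem stmt_1 (n : ℕ) (hn : 1 ≤ n) (σ : ℕ → ℕ)
    (hσ : Set.BijOn σ (Set.Icc 1 n) (Set.Icc 1 n)) (P : ℕ → ℕ)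
    (hsort : SortsOnQueues n σ P) (hP1 : P 1 = 1) :
    1 + descents n σ ≤ P n := by
  have key : ∀ m, m + 1 ≤ n → 1 + descents (m + 1) σ ≤ P (m + 1) := by
    intro m
    induction m with
    | zero => intro _; simp [descents, hP1]
    | succ k ih =>
      intro hk
      have h1 := ih (by omega)
      have h2 := (hsort (k + 1) (by simp; omega) (k + 1 + 1) (by simp; omega)).1 (by omega)
      simp only [descents, Nat.add_sub_cancel] at h1 ⊢
      have hI : Finset.Icc 1 (k + 1) = insert (k + 1) (Finset.Icc 1 k) := by
        ext x
        simp only [Finset.mem_Icc, Finset.mem_insert]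
        omega
      rw [hI, Finset.filter_insert]
      split_ifs with hd
      · have := Finset.card_insert_le (k + 1) ((Finset.Icc 1 k).filter (fun s => σ (s + 1) < σ s))
        omega
      · omega
  have := key (n - 1) (by omega)
  rwa [Nat.sub_add_cancel hn] at this
end

section
/- Let n ≥ 1 and let σ be a permutation of [n]. Define the cumulative ascending runs function P*(s) = 1 + |{s' ∈ [s−1] : σ(s'+1) < σ(s')}| for s ∈ [n]. Then P* sorts σ on queues, P*(1) = 1, P*(n) = 1 + desc(σ), and P* is minimal: every P that sorts σ on queues with P(1) = 1 satisfies P(n) ≥ P*(n). -/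
/-- The cumulative ascending runs function
`P*(s) = 1 + |{s' ∈ [s−1] : σ(s'+1) < σ(s')}|`. -/
def cumAscRuns (σ : ℕ → ℕ) (s : ℕ) : ℕ :=
  1 + ((Finset.Icc 1 (s - 1)).filter (fun s' => σ (s' + 1) < σ s')).card

lemma cumAscRuns_one (σ : ℕ → ℕ) : cumAscRuns σ 1 = 1 := by
  simp [cumAscRuns]

lemma cumAscRuns_succ (σ : ℕ → ℕ) {s : ℕ} (hs : 1 ≤ s) :
    cumAscRuns σ (s + 1) = cumAscRuns σ s + if σ (s + 1) < σ s then 1 else 0 := by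
  obtain ⟨k, rfl⟩ : ∃ k, s = k + 1 := ⟨s - 1, by omega⟩
  simp only [cumAscRuns, Nat.add_sub_cancel]
  rw [← Finset.insert_Icc_right_eq_Icc_add_one (by omega), Finset.filter_insert]
  split_ifs
  · rw [Finset.card_insert_of_notMem (by simp)]
    omega
  · omega

/-- The lexicographic increase of `(P* s, σ s)` along `s < t`. It gives one direction of the sorting
condition; the other follows because the lexicographic order is asymmetric. -/
lemma cumAscRuns_lex {n : ℕ} {σ : ℕ → ℕ} (hσ : Set.InjOn σ (Set.Icc 1 n)) {s t : ℕ}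
    (hs : 1 ≤ s) (hst : s < t) (ht : t ≤ n) :
    cumAscRuns σ s < cumAscRuns σ t ∨ (cumAscRuns σ s = cumAscRuns σ t ∧ σ s < σ t) := by
  have step : ∀ k, 1 ≤ k → k + 1 ≤ n → cumAscRuns σ k < cumAscRuns σ (k + 1) ∨
      (cumAscRuns σ k = cumAscRuns σ (k + 1) ∧ σ k < σ (k + 1)) := by
    intro k hk hkn
    have hne : σ k ≠ σ (k + 1) := fun h => by
      have := hσ ⟨hk, by omega⟩ ⟨by omega, hkn⟩ h
      omega
    rw [cumAscRuns_succ σ hk]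
    split_ifs <;> omega
  induction t, hst using Nat.le_induction with
  | base => exact step s hs ht
  | succ t hst ih =>
    have h₁ := ih (by omega)
    have h₂ := step t (by omega) ht
    omega

lemma cumAscRuns_le_of_sorts {n : ℕ} {σ P : ℕ → ℕ} (hP : SortsOnQueues n σ P) (h1 : P 1 = 1)
    {s : ℕ} (hs : 1 ≤ s) (hsn : s ≤ n) : cumAscRuns σ s ≤ P s := by
  induction s, hs using Nat.le_induction with
  | base => rw [cumAscRuns_one, h1]
  | succ k hk ih =>
    have hle := ih (by omega)
    have h := (hP k (Finset.mem_Icc.2 ⟨hk, by omega⟩) (k + 1)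
      (Finset.mem_Icc.2 ⟨by omega, hsn⟩)).1 (Nat.lt_succ_self k)
    rw [cumAscRuns_succ σ hk]
    split_ifs <;> omega

theorem stmt_2 (n : ℕ) (hn : 1 ≤ n) (σ : ℕ → ℕ)
    (hσ : Set.BijOn σ (Set.Icc 1 n) (Set.Icc 1 n)) :
    SortsOnQueues n σ (cumAscRuns σ) ∧
    cumAscRuns σ 1 = 1 ∧
    cumAscRuns σ n = 1 + descents n σ ∧
    ∀ P : ℕ → ℕ, SortsOnQueues n σ P → P 1 = 1 → cumAscRuns σ n ≤ P n := by
  refine ⟨fun s hs t ht => ⟨fun hst => ?_, fun h => ?_⟩, cumAscRuns_one σ, rfl,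
    fun P hP h1 => cumAscRuns_le_of_sorts hP h1 hn le_rfl⟩
  · exact cumAscRuns_lex hσ.injOn (Finset.mem_Icc.1 hs).1 hst (Finset.mem_Icc.1 ht).2
  · rcases lt_trichotomy s t with hst | rfl | hts
    · exact hst
    · omega
    · have := cumAscRuns_lex hσ.injOn (Finset.mem_Icc.1 ht).1 hts (Finset.mem_Icc.1 hs).2
      omega
end

section
/- Let n ≥ 1, let σ be a permutation of [n], and let m ≥ 1. There exists a pile assignment P : [n] → [m] that sorts σ on queues if and only if ascruns(σ) ≤ m. -/
/-- The number of ascending runs of `σ`, `1 + desc(σ)`. -/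
def ascRuns (n : ℕ) (σ : ℕ → ℕ) : ℕ := 1 + descents n σ

theorem ascRuns_one (σ : ℕ → ℕ) : ascRuns 1 σ = 1 := by
  simp [ascRuns, descents]

theorem ascRuns_succ (σ : ℕ → ℕ) (s : ℕ) (hs : 1 ≤ s) :
    ascRuns (s + 1) σ = ascRuns s σ + if σ (s + 1) < σ s then 1 else 0 := by
  obtain ⟨k, rfl⟩ : ∃ k, s = k + 1 := ⟨s - 1, by omega⟩
  have h : Finset.Icc 1 (k + 1) = insert (k + 1) (Finset.Icc 1 k) := by
    ext x
    simp only [Finset.mem_Icc, Finset.mem_insert]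
    omega
  unfold ascRuns descents
  simp only [Nat.add_sub_cancel]
  rw [h, Finset.filter_insert]
  split_ifs with hd
  · rw [Finset.card_insert_of_notMem (by simp)]
    omega
  · omega

/-- Among sorting assignments with positive pile labels, the index of the ascending run is a pointwise
lower bound: a sorting assignment never decreases in the label and must increase at a descent. -/
theorem ascRuns_le_of_sorts {n : ℕ} {σ P : ℕ → ℕ} (hP : SortsOnQueues n σ P)
    (hpos : ∀ s ∈ Finset.Icc 1 n, 1 ≤ P s) (s : ℕ) (hs : 1 ≤ s) :
    s ≤ n → ascRuns s σ ≤ P s := by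
  induction s, hs using Nat.le_induction with
  | base =>
    intro h
    rw [ascRuns_one]
    exact hpos 1 (by simp [h])
  | succ s hs ih =>
    intro h
    have h1 := ih (by omega)
    have h2 := (hP s (Finset.mem_Icc.2 ⟨hs, by omega⟩) (s + 1)
      (Finset.mem_Icc.2 ⟨by omega, h⟩)).1 (by omega)
    rw [ascRuns_succ σ s hs]
    split_ifs <;> omega

/-- The pairs `(ascRuns s σ, σ s)` increase lexicographically in the label `s`. -/
theorem ascRuns_lex_of_lt {n : ℕ} {σ : ℕ → ℕ} (hσ : Set.InjOn σ (Set.Icc 1 n))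
    {s : ℕ} (hs : 1 ≤ s) (t : ℕ) (hst : s + 1 ≤ t) :
    t ≤ n → ascRuns s σ < ascRuns t σ ∨ (ascRuns s σ = ascRuns t σ ∧ σ s < σ t) := by
  have step : ∀ u, 1 ≤ u → u + 1 ≤ n → ascRuns u σ < ascRuns (u + 1) σ ∨
      (ascRuns u σ = ascRuns (u + 1) σ ∧ σ u < σ (u + 1)) := by
    intro u hu hun
    have hne : σ u ≠ σ (u + 1) := fun h => by
      have := hσ (Set.mem_Icc.2 ⟨hu, by omega⟩) (Set.mem_Icc.2 ⟨by omega, hun⟩) h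
      omega
    rw [ascRuns_succ σ u hu]
    split_ifs <;> omega
  induction t, hst using Nat.le_induction with
  | base => exact step s hs
  | succ t ht ih =>
    intro h
    have h1 := ih (by omega)
    have h2 := step t (by omega) h
    omega

theorem stmt_3 (n : ℕ) (hn : 1 ≤ n) (σ : ℕ → ℕ)
    (hσ : Set.BijOn σ (Set.Icc 1 n) (Set.Icc 1 n)) (m : ℕ) (hm : 1 ≤ m) :
    (∃ P : ℕ → ℕ, (∀ s ∈ Finset.Icc 1 n, P s ∈ Finset.Icc 1 m) ∧
      SortsOnQueues n σ P) ↔ ascRuns n σ ≤ m := by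
  constructor
  · rintro ⟨P, hPm, hP⟩
    exact (ascRuns_le_of_sorts hP (fun s hs => (Finset.mem_Icc.1 (hPm s hs)).1) n hn le_rfl).trans
      (Finset.mem_Icc.1 (hPm n (Finset.mem_Icc.2 ⟨hn, le_rfl⟩))).2
  · intro h
    refine ⟨fun s => ascRuns s σ, fun s hs => ?_, fun s hs t ht => ?_⟩
    · obtain ⟨h1, h2⟩ := Finset.mem_Icc.1 hs
      refine Finset.mem_Icc.2 ⟨Nat.le_add_right 1 _, ?_⟩
      rcases h2.eq_or_lt with rfl | h2
      · exact h
      · have := ascRuns_lex_of_lt hσ.injOn h1 n h2 le_rfl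
        show ascRuns s σ ≤ m
        omega
    · obtain ⟨hs1, hs2⟩ := Finset.mem_Icc.1 hs
      obtain ⟨ht1, ht2⟩ := Finset.mem_Icc.1 ht
      refine ⟨fun hst => ascRuns_lex_of_lt hσ.injOn hs1 t hst ht2, fun hlex => ?_⟩
      -- The lexicographic order is asymmetric, so `t ≤ s` is impossible.
      by_contra hst
      beta_reduce at hlex
      rcases (not_lt.1 hst).eq_or_lt with rfl | hts
      · omega
      · have := ascRuns_lex_of_lt hσ.injOn ht1 s hts hs2
        omega
end

section
/- Let n ≥ 1, let σ be a permutation of [n], and let P : [n] → ℕ be a pile assignment. Then P sorts σ on stacks if and only if for every s ∈ [n−1]: P(s+1) ≥ P(s) + 1 whenever σ(s+1) > σ(s), and P(s+1) ≥ P(s) whenever σ(s+1) < σ(s). -/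
/-!
Compare cards by the pair (pile, reversed position): `s` precedes `t` when `P s < P t`, or
`P s = P t` and `σ t < σ s`. This relation is transitive and asymmetric, and sorting says that it
agrees with `<` on `[n]`. The two inequalities at `s` say that `s` precedes `s + 1`
(positions are distinct because `σ` is injective). Transitivity extends this to all pairs `s < t`
(`precedes_of_consecutive`), and asymmetry gives the converse implication.
-/

/-- `P` sorts `σ` on stacks: for all `s, t ∈ [n]`,
`s < t` iff `P s < P t`, or `P s = P t` and `σ s > σ t`. -/
def SortsOnStacks (n : ℕ) (σ P : ℕ → ℕ) : Prop :=
  ∀ s ∈ Finset.Icc 1 n, ∀ t ∈ Finset.Icc 1 n,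
    (s < t ↔ P s < P t ∨ (P s = P t ∧ σ t < σ s))

/-- Chaining the comparison of consecutive cards: by transitivity of the lexicographic comparison,
every earlier card precedes every later one. -/
lemma precedes_of_consecutive {n : ℕ} {σ P : ℕ → ℕ}
    (h : ∀ s, 1 ≤ s → s + 1 ≤ n → P s < P (s + 1) ∨ (P s = P (s + 1) ∧ σ (s + 1) < σ s))
    {s t : ℕ} (hs : 1 ≤ s) (hst : s < t) (ht : t ≤ n) :
    P s < P t ∨ (P s = P t ∧ σ t < σ s) := by
  induction t, hst using Nat.le_induction with
  | base => exact h s hs ht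
  | succ t hst ih =>
    have h₁ := ih (by omega)
    have h₂ := h t (by omega) ht
    omega

theorem stmt_4 (n : ℕ) (hn : 1 ≤ n) (σ : ℕ → ℕ)
    (hσ : Set.BijOn σ (Set.Icc 1 n) (Set.Icc 1 n)) (P : ℕ → ℕ) :
    SortsOnStacks n σ P ↔
      ∀ s ∈ Finset.Icc 1 (n - 1),
        (σ s < σ (s + 1) → P s + 1 ≤ P (s + 1)) ∧
        (σ (s + 1) < σ s → P s ≤ P (s + 1)) := by
  constructor
  · intro h s hs
    rw [Finset.mem_Icc] at hs
    have h₁ := (h s (Finset.mem_Icc.2 (by omega)) (s + 1) (Finset.mem_Icc.2 (by omega))).1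
      (Nat.lt_succ_self s)
    omega
  · intro h
    have hstep : ∀ s, 1 ≤ s → s + 1 ≤ n →
        P s < P (s + 1) ∨ (P s = P (s + 1) ∧ σ (s + 1) < σ s) := by
      intro s hs hsn
      have hne : σ s ≠ σ (s + 1) := fun he => by
        have := hσ.injOn (Set.mem_Icc.2 ⟨hs, by omega⟩) (Set.mem_Icc.2 ⟨by omega, hsn⟩) he
        omega
      have := h s (Finset.mem_Icc.2 (by omega))
      omega
    intro s hs t ht
    rw [Finset.mem_Icc] at hs ht
    refine ⟨fun hst => precedes_of_consecutive hstep hs.1 hst ht.2, fun hst => ?_⟩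
    by_contra hlt
    rcases (not_lt.1 hlt).eq_or_lt with rfl | hts
    · omega
    · have := precedes_of_consecutive hstep ht.1 hts hs.2
      omega
end

section
/- Let n ≥ 1, let σ be a permutation of [n], and suppose P : [n] → ℕ sorts σ on stacks with P(1) = 1. Then the number of piles used satisfies P(n) ≥ 1 + ascs(σ). -/
/-- The number of ascents of `σ`, `|{s ∈ [n−1] : σ(s+1) > σ(s)}|`. -/
def ascents (n : ℕ) (σ : ℕ → ℕ) : ℕ :=
  ((Finset.Icc 1 (n - 1)).filter (fun s => σ s < σ (s + 1))).card

theorem stmt_5 (n : ℕ) (hn : 1 ≤ n) (σ : ℕ → ℕ)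
    (hσ : Set.BijOn σ (Set.Icc 1 n) (Set.Icc 1 n)) (P : ℕ → ℕ)
    (hsort : SortsOnStacks n σ P) (hP1 : P 1 = 1) :
    1 + ascents n σ ≤ P n := by
  -- Since `m < m + 1`, sorting forces `P m < P (m + 1)`, or `P m = P (m + 1)` with a descent
  -- at `m`. So `P` is weakly increasing and jumps at every ascent; induct on the prefix length.
  suffices h : ∀ m, 1 ≤ m → m ≤ n → 1 + ascents m σ ≤ P m from h n hn le_rfl
  intro m hm
  induction m, hm using Nat.le_induction with
  | base => simp [ascents, hP1]
  | succ m hm ih =>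
    intro hmn
    have ih := ih (by omega)
    have hs := (hsort m (by simp; omega) (m + 1) (by simp; omega)).1 (Nat.lt_succ_self m)
    have hstep : ascents (m + 1) σ = ascents m σ + if σ m < σ (m + 1) then 1 else 0 := by
      obtain ⟨k, rfl⟩ : ∃ k, m = k + 1 := ⟨m - 1, by omega⟩
      simp only [ascents, Nat.add_sub_cancel]
      rw [← Finset.insert_Icc_right_eq_Icc_add_one (by omega), Finset.filter_insert]
      split_ifs <;> simp
    split_ifs at hstep <;> omega
end

section
/- Let n ≥ 1 and let σ be a permutation of [n]. Define the cumulative descending runs function P*(s) = 1 + |{s' ∈ [s−1] : σ(s'+1) > σ(s')}| for s ∈ [n]. Then P* sorts σ on stacks, P*(1) = 1, P*(n) = 1 + ascs(σ), and P* is minimal: every P that sorts σ on stacks with P(1) = 1 satisfies P(n) ≥ P*(n). -/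
/-- The cumulative descending runs function
`P*(s) = 1 + |{s' ∈ [s−1] : σ(s'+1) > σ(s')}|`. -/
def cumDescRuns (σ : ℕ → ℕ) (s : ℕ) : ℕ :=
  1 + ((Finset.Icc 1 (s - 1)).filter (fun s' => σ s' < σ (s' + 1))).card

theorem cumDescRuns_succ (σ : ℕ → ℕ) (s : ℕ) (hs : 1 ≤ s) :
    cumDescRuns σ (s + 1) = cumDescRuns σ s + if σ s < σ (s + 1) then 1 else 0 := by
  obtain ⟨k, rfl⟩ : ∃ k, s = k + 1 := ⟨s - 1, by omega⟩
  unfold cumDescRuns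
  simp only [Nat.add_sub_cancel]
  rw [← Finset.insert_Icc_right_eq_Icc_add_one (by omega), Finset.filter_insert]
  split_ifs with h
  · rw [Finset.card_insert_of_notMem (by simp)]
    omega
  · rfl

theorem cumDescRuns_lt_or (n : ℕ) (σ : ℕ → ℕ) (hσ : Set.InjOn σ (Set.Icc 1 n))
    (s t : ℕ) (hs : 1 ≤ s) (hst : s < t) (ht : t ≤ n) :
    cumDescRuns σ s < cumDescRuns σ t ∨
      (cumDescRuns σ s = cumDescRuns σ t ∧ σ t < σ s) := by
  have hne : ∀ k, 1 ≤ k → k + 1 ≤ n → σ k ≠ σ (k + 1) := fun k h1 h2 h => by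
    have := hσ (Set.mem_Icc.2 ⟨h1, by omega⟩) (Set.mem_Icc.2 ⟨by omega, h2⟩) h
    omega
  induction t, hst using Nat.le_induction with
  | base =>
    have h1 := cumDescRuns_succ σ s hs
    have h2 := hne s hs ht
    simp only [Nat.succ_eq_add_one] at *
    split_ifs at h1 <;> omega
  | succ t hst ih =>
    have h1 := cumDescRuns_succ σ t (by omega)
    have h2 := hne t (by omega) ht
    have h3 := ih (by omega)
    split_ifs at h1 <;> omega

theorem stmt_6 (n : ℕ) (hn : 1 ≤ n) (σ : ℕ → ℕ)
    (hσ : Set.BijOn σ (Set.Icc 1 n) (Set.Icc 1 n)) :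
    SortsOnStacks n σ (cumDescRuns σ) ∧
    cumDescRuns σ 1 = 1 ∧
    cumDescRuns σ n = 1 + ascents n σ ∧
    ∀ P : ℕ → ℕ, SortsOnStacks n σ P → P 1 = 1 → cumDescRuns σ n ≤ P n := by
  refine ⟨?_, rfl, rfl, ?_⟩
  · intro s hs t ht
    rw [Finset.mem_Icc] at hs ht
    refine ⟨fun h => cumDescRuns_lt_or n σ hσ.injOn s t hs.1 h ht.2, fun h => ?_⟩
    rcases lt_trichotomy s t with hlt | rfl | hgt
    · exact hlt
    · omega
    · have := cumDescRuns_lt_or n σ hσ.injOn t s ht.1 hgt hs.2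
      omega
  · intro P hP hP1
    have key : ∀ k, 1 ≤ k → k ≤ n → cumDescRuns σ k ≤ P k := by
      intro k hk
      induction k, hk using Nat.le_induction with
      | base => intro _; exact hP1.ge
      | succ k hk ih =>
        intro hkn
        have h1 := cumDescRuns_succ σ k hk
        have h2 := ih (by omega)
        have h3 := (hP k (Finset.mem_Icc.2 ⟨hk, by omega⟩) (k + 1)
          (Finset.mem_Icc.2 ⟨by omega, hkn⟩)).1 (Nat.lt_succ_self k)
        split_ifs at h1 <;> omega
    exact key n hn le_rfl
end

section
/- Let n ≥ 1, let σ be a permutation of [n], and let m ≥ 1. There exists a pile assignment P : [n] → [m] that sorts σ on stacks if and only if descruns(σ) ≤ m. -/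
/-- The number of descending runs of `σ`, `1 + ascs(σ)`. -/
def descRuns (n : ℕ) (σ : ℕ → ℕ) : ℕ := 1 + ascents n σ

lemma descRuns_one (σ : ℕ → ℕ) : descRuns 1 σ = 1 := by
  simp [descRuns, ascents]

lemma descRuns_succ (σ : ℕ → ℕ) {k : ℕ} (hk : 1 ≤ k) :
    descRuns (k + 1) σ = descRuns k σ + if σ k < σ (k + 1) then 1 else 0 := by
  obtain ⟨j, rfl⟩ : ∃ j, k = j + 1 := ⟨k - 1, by omega⟩
  have h : Finset.Icc 1 (j + 1) = insert (j + 1) (Finset.Icc 1 j) := by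
    ext x
    simp only [Finset.mem_Icc, Finset.mem_insert]
    omega
  unfold descRuns ascents
  simp only [Nat.add_sub_cancel]
  rw [h, Finset.filter_insert]
  split_ifs
  · rw [Finset.card_insert_of_notMem (by simp)]
    omega
  · omega

lemma descRuns_le_of_sorts {n : ℕ} {σ P : ℕ → ℕ} (hP : SortsOnStacks n σ P)
    (h1 : 1 ≤ P 1) {k : ℕ} (hk : 1 ≤ k) (hkn : k ≤ n) : descRuns k σ ≤ P k := by
  induction k, hk using Nat.le_induction with
  | base => rwa [descRuns_one]
  | succ k hk ih =>
    have ih := ih (by omega)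
    have h := (hP k (Finset.mem_Icc.2 ⟨hk, by omega⟩) (k + 1)
      (Finset.mem_Icc.2 ⟨by omega, hkn⟩)).1 (by omega)
    rw [descRuns_succ σ hk]
    split_ifs <;> omega

lemma descRuns_lt_or {n : ℕ} {σ : ℕ → ℕ} (hσ : Set.InjOn σ (Set.Icc 1 n)) {s t : ℕ}
    (hs : 1 ≤ s) (hst : s < t) (htn : t ≤ n) :
    descRuns s σ < descRuns t σ ∨ (descRuns s σ = descRuns t σ ∧ σ t < σ s) := by
  have step : ∀ k, 1 ≤ k → k + 1 ≤ n → descRuns k σ < descRuns (k + 1) σ ∨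
      (descRuns k σ = descRuns (k + 1) σ ∧ σ (k + 1) < σ k) := by
    intro k hk hkn
    have hne : σ k ≠ σ (k + 1) := fun h => by
      have := hσ ⟨hk, by omega⟩ ⟨by omega, hkn⟩ h
      omega
    rw [descRuns_succ σ hk]
    split_ifs <;> omega
  induction t, (show s + 1 ≤ t from hst) using Nat.le_induction with
  | base => exact step s hs htn
  | succ t ht ih =>
    have ih := ih (by omega) (by omega)
    have := step t (by omega) htn
    omega

theorem stmt_7 (n : ℕ) (hn : 1 ≤ n) (σ : ℕ → ℕ)
    (hσ : Set.BijOn σ (Set.Icc 1 n) (Set.Icc 1 n)) (m : ℕ) (hm : 1 ≤ m) :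
    (∃ P : ℕ → ℕ, (∀ s ∈ Finset.Icc 1 n, P s ∈ Finset.Icc 1 m) ∧
      SortsOnStacks n σ P) ↔ descRuns n σ ≤ m := by
  constructor
  · rintro ⟨P, hPm, hP⟩
    have h1 := (Finset.mem_Icc.1 (hPm 1 (Finset.mem_Icc.2 ⟨le_rfl, hn⟩))).1
    have h2 := (Finset.mem_Icc.1 (hPm n (Finset.mem_Icc.2 ⟨hn, le_rfl⟩))).2
    exact (descRuns_le_of_sorts hP h1 hn le_rfl).trans h2
  · intro h
    refine ⟨fun s => descRuns s σ, ?_, ?_⟩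
    · intro s hs
      obtain ⟨hs1, hsn⟩ := Finset.mem_Icc.1 hs
      refine Finset.mem_Icc.2 ⟨by simp [descRuns], ?_⟩
      rcases hsn.eq_or_lt with rfl | hlt
      · exact h
      · have := descRuns_lt_or hσ.injOn hs1 hlt le_rfl
        show descRuns s σ ≤ m
        omega
    · intro s hs t ht
      obtain ⟨hs1, hsn⟩ := Finset.mem_Icc.1 hs
      obtain ⟨ht1, htn⟩ := Finset.mem_Icc.1 ht
      refine ⟨fun hst => descRuns_lt_or hσ.injOn hs1 hst htn, fun hor => ?_⟩
      -- The right-hand side is a strict order, so it excludes both `s = t` and `t < s`.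
      beta_reduce at hor
      rcases lt_trichotomy s t with hlt | rfl | hgt
      · exact hlt
      · omega
      · have := descRuns_lt_or hσ.injOn ht1 hgt hsn
        omega
end

section
/- Let n ≥ 1, let σ be a permutation of [n], let x : ℕ → {0,1} be a type indicator, and let P : [n] → ℕ be a pile assignment. Then (x, P) sorts σ if and only if for every s ∈ [n−1]: if x(P(s)) = 0 then P(s+1) ≥ P(s) + 1 when σ(s+1) < σ(s) and P(s+1) ≥ P(s) when σ(s+1) > σ(s); and if x(P(s)) = 1 then P(s+1) ≥ P(s) + 1 when σ(s+1) > σ(s) and P(s+1) ≥ P(s) when σ(s+1) < σ(s). -/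
/-!
Call `s` *before* `t` when the shuffled deck has `s` ahead of `t`: a smaller pile, or the same
pile and the order prescribed by its type. This is a strict partial order on labels, and sorting
says that it agrees with `<` on `[n]`. A strict order agrees with `<` as soon as each `s` is before
`s + 1` (`PileBefore.trans` extends this to all `s < t`, `PileBefore.asymm` gives the converse), and
since `σ s ≠ σ (s + 1)`, being before the successor is exactly the stated local condition.
-/

/-- The heterogeneous shuffle `(x, P)` sorts `σ`: for all `s, t ∈ [n]`,
`s < t` iff `P s < P t`, or `P s = P t` and (`σ s < σ t` when pile `P s` is a
queue (`x (P s) = 0`), respectively `σ s > σ t` when it is a stack (`x (P s) = 1`)). -/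
def HeteroSorts (n : ℕ) (x : ℕ → Fin 2) (σ P : ℕ → ℕ) : Prop :=
  ∀ s ∈ Finset.Icc 1 n, ∀ t ∈ Finset.Icc 1 n,
    (s < t ↔ P s < P t ∨ (P s = P t ∧
      (if x (P s) = 0 then σ s < σ t else σ t < σ s)))

/-- Card `s` precedes card `t` after the piles are collected. -/
def PileBefore (x : ℕ → Fin 2) (σ P : ℕ → ℕ) (s t : ℕ) : Prop :=
  P s < P t ∨ (P s = P t ∧ (if x (P s) = 0 then σ s < σ t else σ t < σ s))

lemma PileBefore.trans {x : ℕ → Fin 2} {σ P : ℕ → ℕ} {s t u : ℕ}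
    (h₁ : PileBefore x σ P s t) (h₂ : PileBefore x σ P t u) : PileBefore x σ P s u := by
  unfold PileBefore at *
  grind

lemma PileBefore.asymm {x : ℕ → Fin 2} {σ P : ℕ → ℕ} {s t : ℕ}
    (h₁ : PileBefore x σ P s t) : ¬ PileBefore x σ P t s := by
  unfold PileBefore at *
  grind

/-- For distinct positions, the local inequalities on piles say exactly that `s` is before `t`. -/
lemma pileBefore_iff {x : ℕ → Fin 2} {σ P : ℕ → ℕ} {s t : ℕ} (hne : σ s ≠ σ t) :
    PileBefore x σ P s t ↔
      (x (P s) = 0 → (σ t < σ s → P s + 1 ≤ P t) ∧ (σ s < σ t → P s ≤ P t)) ∧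
      (x (P s) = 1 → (σ s < σ t → P s + 1 ≤ P t) ∧ (σ t < σ s → P s ≤ P t)) := by
  unfold PileBefore
  have hx : x (P s) = 0 ∨ x (P s) = 1 := by omega
  rcases hx with hx | hx <;> simp [hx] <;> omega

theorem stmt_8 (n : ℕ) (hn : 1 ≤ n) (σ : ℕ → ℕ)
    (hσ : Set.BijOn σ (Set.Icc 1 n) (Set.Icc 1 n))
    (x : ℕ → Fin 2) (P : ℕ → ℕ) :
    HeteroSorts n x σ P ↔
      ∀ s ∈ Finset.Icc 1 (n - 1),
        (x (P s) = 0 →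
          (σ (s + 1) < σ s → P s + 1 ≤ P (s + 1)) ∧
          (σ s < σ (s + 1) → P s ≤ P (s + 1))) ∧
        (x (P s) = 1 →
          (σ s < σ (s + 1) → P s + 1 ≤ P (s + 1)) ∧
          (σ (s + 1) < σ s → P s ≤ P (s + 1))) := by
  have hne : ∀ s ∈ Finset.Icc 1 (n - 1), σ s ≠ σ (s + 1) := by
    intro s hs h
    rw [Finset.mem_Icc] at hs
    have := hσ.injOn (Set.mem_Icc.2 ⟨hs.1, by omega⟩) (Set.mem_Icc.2 ⟨by omega, by omega⟩) h
    omega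
  constructor
  · intro h s hs
    refine (pileBefore_iff (hne s hs)).1 ?_
    rw [Finset.mem_Icc] at hs
    exact (h s (Finset.mem_Icc.2 ⟨hs.1, by omega⟩) (s + 1)
      (Finset.mem_Icc.2 ⟨by omega, by omega⟩)).1 (Nat.lt_succ_self s)
  · intro h
    have step : ∀ s ∈ Finset.Icc 1 (n - 1), PileBefore x σ P s (s + 1) :=
      fun s hs => (pileBefore_iff (hne s hs)).2 (h s hs)
    have mono : ∀ s t, 1 ≤ s → s < t → t ≤ n → PileBefore x σ P s t := by
      intro s t hs hst
      induction t, hst using Nat.le_induction with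
      | base => exact fun hn => step s (Finset.mem_Icc.2 ⟨hs, by omega⟩)
      | succ t hst ih =>
        exact fun hn => (ih (by omega)).trans (step t (Finset.mem_Icc.2 ⟨by omega, by omega⟩))
    intro s hs t ht
    rw [Finset.mem_Icc] at hs ht
    change s < t ↔ PileBefore x σ P s t
    refine ⟨fun hst => mono s t hs.1 hst ht.2, fun hb => ?_⟩
    rcases lt_trichotomy s t with hst | rfl | hts
    · exact hst
    · exact absurd hb hb.asymm
    · exact absurd (mono t s ht.1 hts hs.2) hb.asymm
end

section
/- Let n ≥ 1, let σ be a permutation of [n], and let x : ℕ → {0,1} be a type indicator. Define P* : [n] → ℕ recursively by P*(1) = 1, and for s ∈ [n−1]: P*(s+1) = P*(s) + 1 if either (x(P*(s)) = 0 and σ(s+1) < σ(s)) or (x(P*(s)) = 1 and σ(s+1) > σ(s)), and P*(s+1) = P*(s) otherwise. Then for every pile assignment P : [n] → ℕ such that (x, P) sorts σ and P(1) = 1, we have P(s) ≥ P*(s) for all s ∈ [n]. -/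
theorem stmt_9 (n : ℕ) (hn : 1 ≤ n) (σ : ℕ → ℕ)
    (hσ : Set.BijOn σ (Set.Icc 1 n) (Set.Icc 1 n))
    (x : ℕ → Fin 2) (Pstar : ℕ → ℕ)
    (hPstar1 : Pstar 1 = 1)
    (hPstarRec : ∀ s ∈ Finset.Icc 1 (n - 1),
      Pstar (s + 1) =
        if (x (Pstar s) = 0 ∧ σ (s + 1) < σ s) ∨
           (x (Pstar s) = 1 ∧ σ s < σ (s + 1)) then
          Pstar s + 1
        else Pstar s) :
    ∀ P : ℕ → ℕ, HeteroSorts n x σ P → P 1 = 1 →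
      ∀ s ∈ Finset.Icc 1 n, Pstar s ≤ P s := by
  intro P hP hP1 s hs
  obtain ⟨h1, hsn⟩ := Finset.mem_Icc.mp hs
  clear hs
  induction s, h1 using Nat.le_induction with
  | base => omega
  | succ s h1 ih =>
    have ih := ih (by omega)
    have hrec := hPstarRec s (Finset.mem_Icc.mpr (by omega))
    have hstep := (hP s (Finset.mem_Icc.mpr (by omega)) (s + 1)
      (Finset.mem_Icc.mpr (by omega))).mp (Nat.lt_succ_self s)
    rcases hstep with hlt | ⟨heq, hord⟩
    · split_ifs at hrec <;> omega
    · rcases ih.lt_or_eq with hlt | hpile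
      · split_ifs at hrec <;> omega
      -- Both cards share the pile `Pstar s`, whose order condition rules out an increment.
      · rw [← hpile] at hord
        rw [if_neg] at hrec
        · omega
        · rintro (⟨hx, hσlt⟩ | ⟨hx, hσlt⟩)
          · rw [if_pos hx] at hord
            omega
          · rw [if_neg (by simp [hx])] at hord
            omega
end

section
/- Let n ≥ 2 and let σ be a permutation of [n]. Define sequences p : [n] → ℕ and τ : [n] → {0,1} recursively as follows: p(1) = 1; for each s ∈ [n], if s = 1 or p(s) > p(s−1) (a new pile is opened by s) then τ(s) = 0 if s < n and σ(s+1) > σ(s), and τ(s) = 1 if s < n and σ(s+1) < σ(s) (and τ(n) = 0 if s = n opens a new pile), while if p(s) = p(s−1) then τ(s) = τ(s−1); and for s ∈ [n−1], p(s+1) = p(s) if (τ(s) = 0 and σ(s+1) > σ(s)) or (τ(s) = 1 and σ(s+1) < σ(s)), and p(s+1) = p(s) + 1 otherwise. Let x* : ℕ → {0,1} be any type indicator with x*(p(s)) = τ(s) for all s ∈ [n]. Then (x*, p) sorts σ, and for every type indicator x : ℕ → {0,1} and pile assignment P with (x, P) sorting σ and P(1) = 1, we have P(n) ≥ p(n).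 -/
/-- If every step of `p` either opens a new pile or follows the direction of the current pile,
then `p` is nondecreasing and any two cards of one pile are in the order its type demands. -/
theorem greedy_chain (n : ℕ) (σ p : ℕ → ℕ) (x : ℕ → Fin 2)
    (hstep : ∀ s, 1 ≤ s → s < n → p s < p (s + 1) ∨ (p s = p (s + 1) ∧
      (if x (p s) = 0 then σ s < σ (s + 1) else σ (s + 1) < σ s)))
    (s t : ℕ) (hs : 1 ≤ s) (hst : s < t) (ht : t ≤ n) :
    p s < p t ∨ (p s = p t ∧ (if x (p s) = 0 then σ s < σ t else σ t < σ s)) := by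
  induction t, hst using Nat.le_induction with
  | base => exact hstep s hs ht
  | succ t hst ih =>
    have h1 := ih (by omega)
    have h2 := hstep t (by omega) (by omega)
    rcases h1 with h1 | ⟨h1, h1'⟩ <;> rcases h2 with h2 | ⟨h2, h2'⟩
    · left; omega
    · left; omega
    · left; omega
    · right
      rw [← h1] at h2'
      refine ⟨by omega, ?_⟩
      split_ifs at * <;> omega

theorem stmt_11 (n : ℕ) (hn : 2 ≤ n) (σ : ℕ → ℕ)
    (hσ : Set.BijOn σ (Set.Icc 1 n) (Set.Icc 1 n))
    (p : ℕ → ℕ) (τ : ℕ → Fin 2)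
    (hp1 : p 1 = 1)
    -- greedy typing of each newly opened pile
    (hτnew : ∀ s ∈ Finset.Icc 1 n, (s = 1 ∨ p (s - 1) < p s) →
      ((s < n → σ s < σ (s + 1) → τ s = 0) ∧
       (s < n → σ (s + 1) < σ s → τ s = 1) ∧
       (s = n → τ s = 0)))
    -- cards in the same pile inherit the pile's type
    (hτold : ∀ s ∈ Finset.Icc 2 n, p s = p (s - 1) → τ s = τ (s - 1))
    -- pile-assignment recurrence
    (hpRec : ∀ s ∈ Finset.Icc 1 (n - 1),
      p (s + 1) =
        if (τ s = 0 ∧ σ s < σ (s + 1)) ∨ (τ s = 1 ∧ σ (s + 1) < σ s) then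
          p s
        else p s + 1)
    -- any type indicator agreeing with τ on the piles used
    (xstar : ℕ → Fin 2)
    (hxstar : ∀ s ∈ Finset.Icc 1 n, xstar (p s) = τ s) :
    HeteroSorts n xstar σ p ∧
    ∀ (x : ℕ → Fin 2) (P : ℕ → ℕ), HeteroSorts n x σ P → P 1 = 1 →
      p n ≤ P n := by
  have hne : ∀ s, 1 ≤ s → s < n → σ s ≠ σ (s + 1) := by
    intro s h1 h2 h
    have := hσ.injOn (Set.mem_Icc.2 ⟨h1, h2.le⟩) (Set.mem_Icc.2 ⟨by omega, h2⟩) h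
    omega
  have hrec : ∀ s, 1 ≤ s → s < n → p (s + 1) =
      if (τ s = 0 ∧ σ s < σ (s + 1)) ∨ (τ s = 1 ∧ σ (s + 1) < σ s) then p s else p s + 1 :=
    fun s h1 h2 => hpRec s (Finset.mem_Icc.2 ⟨h1, by omega⟩)
  constructor
  · have key := greedy_chain n σ p xstar (by
      intro s h1 h2
      have h := hrec s h1 h2
      rw [hxstar s (Finset.mem_Icc.2 ⟨h1, h2.le⟩)]
      split_ifs at h with hc
      · right
        refine ⟨h.symm, ?_⟩
        rcases hc with ⟨ha, hb⟩ | ⟨ha, hb⟩ <;> simp [ha, hb]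
      · left; omega)
    intro s hs t ht
    rw [Finset.mem_Icc] at hs ht
    refine ⟨fun h => key s t hs.1 h ht.2, fun h => ?_⟩
    by_contra hlt
    rcases (not_lt.1 hlt).eq_or_lt with rfl | hts
    · simp at h
    · rcases key t s ht.1 hts hs.2 with h' | ⟨h', h''⟩ <;> rcases h with h | ⟨h, hord⟩
      · omega
      · omega
      · omega
      · rw [h'] at h''
        split_ifs at * <;> omega
  · intro x P hP hP1
    have hPs : ∀ s, 1 ≤ s → s < n → P s < P (s + 1) ∨ (P s = P (s + 1) ∧
        (if x (P s) = 0 then σ s < σ (s + 1) else σ (s + 1) < σ s)) := fun s h1 h2 =>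
      (hP s (Finset.mem_Icc.2 ⟨h1, h2.le⟩) (s + 1) (Finset.mem_Icc.2 ⟨by omega, h2⟩)).1
        (Nat.lt_succ_self s)
    -- the bound at `s - 1` is carried along, since the step to `s + 1` looks back two cards
    have key : ∀ s, 1 ≤ s → s ≤ n → p s ≤ P s ∧ (1 < s → p (s - 1) ≤ P (s - 1)) := by
      intro s hs
      induction s, hs using Nat.le_induction with
      | base => intro _; exact ⟨by omega, by omega⟩
      | succ s hs ih =>
        intro hsn
        obtain ⟨i1, i2⟩ := ih (by omega)
        refine ⟨?_, fun _ => by simpa using i1⟩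
        have hr := hrec s hs hsn
        have hd := hne s hs hsn
        rcases hPs s hs hsn with h | ⟨h, hdir⟩
        · split_ifs at hr <;> omega
        split_ifs at hr with hc
        · omega
        by_contra hcon
        have hnew := hτnew s (Finset.mem_Icc.2 ⟨hs, by omega⟩)
        by_cases hopen : s = 1 ∨ p (s - 1) < p s
        · obtain ⟨n1, n2, -⟩ := hnew hopen
          rcases lt_or_gt_of_ne hd with hl | hl
          · exact hc (Or.inl ⟨n1 hsn hl, hl⟩)
          · exact hc (Or.inr ⟨n2 hsn hl, hl⟩)
        · push Not at hopen
          obtain ⟨hs1, hle⟩ := hopen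
          obtain ⟨r, rfl⟩ : ∃ r, s = r + 1 := ⟨s - 1, by omega⟩
          simp only [Nat.add_sub_cancel] at *
          have hr' := hrec r (by omega) (by omega)
          have i2' := i2 (by omega)
          split_ifs at hr' with hc'
          · have hτ := hτold (r + 1) (Finset.mem_Icc.2 ⟨by omega, by omega⟩) hr'
            simp only [Nat.add_sub_cancel] at hτ
            rcases hPs r (by omega) (by omega) with g | ⟨g, gdir⟩
            · omega
            · rw [g] at gdir
              rw [hτ] at hc
              rcases hc' with ⟨ha, hb⟩ | ⟨ha, hb⟩ <;> simp [ha] at hc <;>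
                split_ifs at * <;> omega
          · omega
    exact (key n (by omega) le_rfl).1
end

section
/- Let n ≥ 1 and T ≥ 1, let m_1, …, m_T ≥ 1, and for each t ∈ [T] let P_t : [n] → {0, 1, …, m_t − 1} be a pile assignment. Let σ_0 = σ be a permutation of [n] and let σ_1, …, σ_T be permutations of [n] with QShuffle(P_t, σ_{t−1}) = σ_t for each t ∈ [T]. Define P̂_T = P_T and P̂_t = P_t + m_t · P̂_{t+1} for 1 ≤ t ≤ T − 1. Then QShuffle(P̂_1, σ) = σ_T. -/
/-!
Two consecutive rounds with assignments `P` (values below `m`) and `Q` act as one round with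
assignment `P + m * Q`: since `P` is the base-`m` low digit, comparing `P + m * Q` is comparing
`(Q, P)` lexicographically, and the second round breaks ties in `Q` by the order produced by the
first (`QShuffle.comp`). Downward induction on `t` then shows that `Phat t` performs rounds
`t, …, T` at once; the case `t = 1` is the theorem.
-/

/-- `QShuffle(P, σ) = σ'`: a single round of pile shuffle on queues with
assignments `P` transforms `σ` into `σ'`: for all `s, t ∈ [n]`,
`σ' s < σ' t` iff `(P s, σ s)` is lexicographically less than `(P t, σ t)`. -/
def QShuffle (n : ℕ) (P σ σ' : ℕ → ℕ) : Prop :=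
  ∀ s ∈ Finset.Icc 1 n, ∀ t ∈ Finset.Icc 1 n,
    (σ' s < σ' t ↔ P s < P t ∨ (P s = P t ∧ σ s < σ t))

/-- A smaller high digit wins whatever the low digits; only the left low digit needs to be a
genuine base-`m` digit. -/
theorem add_mul_lt_of_digit_lt {m a b c d : ℕ} (ha : a < m) (h : c < d) :
    a + m * c < b + m * d := by
  have : m * (c + 1) ≤ m * d := Nat.mul_le_mul_left m h
  rw [Nat.mul_add] at this
  omega

theorem QShuffle.comp {n m : ℕ} {P Q σ σ' σ'' : ℕ → ℕ}
    (hP : ∀ s ∈ Finset.Icc 1 n, P s < m)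
    (h₁ : QShuffle n P σ σ') (h₂ : QShuffle n Q σ' σ'') :
    QShuffle n (fun s => P s + m * Q s) σ σ'' := by
  intro s hs t ht
  rw [h₂ s hs t ht, h₁ s hs t ht]
  dsimp only
  rcases lt_trichotomy (Q s) (Q t) with h | h | h
  · have := add_mul_lt_of_digit_lt (b := P t) (hP s hs) h
    omega
  · rw [h]
    omega
  · have := add_mul_lt_of_digit_lt (b := P s) (hP t ht) h
    omega

theorem stmt_14 (n T : ℕ) (hn : 1 ≤ n) (hT : 1 ≤ T)
    (m : ℕ → ℕ) (hm : ∀ t ∈ Finset.Icc 1 T, 1 ≤ m t)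
    (P : ℕ → ℕ → ℕ)
    (hP : ∀ t ∈ Finset.Icc 1 T, ∀ s ∈ Finset.Icc 1 n, P t s < m t)
    (σ : ℕ → ℕ) (hσ : Set.BijOn σ (Set.Icc 1 n) (Set.Icc 1 n))
    (σs : ℕ → ℕ → ℕ) (hσ0 : σs 0 = σ)
    (hσsbij : ∀ t ∈ Finset.Icc 1 T,
      Set.BijOn (σs t) (Set.Icc 1 n) (Set.Icc 1 n))
    (hrounds : ∀ t ∈ Finset.Icc 1 T, QShuffle n (P t) (σs (t - 1)) (σs t))
    -- the virtual pile assignment P̂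
    (Phat : ℕ → ℕ → ℕ)
    (hPhatT : ∀ s, Phat T s = P T s)
    (hPhatRec : ∀ t ∈ Finset.Icc 1 (T - 1), ∀ s,
      Phat t s = P t s + m t * Phat (t + 1) s) :
    QShuffle n (Phat 1) σ (σs T) := by
  have key : ∀ t, t ≤ T → 1 ≤ t → QShuffle n (Phat t) (σs (t - 1)) (σs T) := by
    intro t ht
    induction ht using Nat.decreasingInduction with
    | self =>
      intro _
      rw [funext hPhatT]
      exact hrounds T (by simp; omega)
    | of_succ k hk ih =>
      intro h1
      rw [funext (hPhatRec k (by simp; omega))]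
      have hkT : k ∈ Finset.Icc 1 T := by simp; omega
      exact QShuffle.comp (hP k hkT) (hrounds k hkT) (ih (by omega))
  rw [← hσ0]
  exact key 1 hT le_rfl
end

section
/- Let n ≥ 1 and T ≥ 1, let m_1, …, m_T ≥ 1, and let σ be a permutation of [n]. There exist pile assignments P_t : [n] → {0, 1, …, m_t − 1} and permutations σ_0 = σ, σ_1, …, σ_T of [n] with QShuffle(P_t, σ_{t−1}) = σ_t for each t ∈ [T] and σ_T equal to the identity permutation, if and only if ascruns(σ) ≤ ∏_{t=1}^{T} m_t. -/
/-- Comparison of two-digit numbers in base `M` is lexicographic comparison of the digits. -/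
lemma add_mul_lt_iff {M a b p q : ℕ} (ha : a < M) (hb : b < M) :
    a + M * p < b + M * q ↔ p < q ∨ (p = q ∧ a < b) := by
  rcases lt_trichotomy p q with h | h | h
  · have : M * (p + 1) ≤ M * q := Nat.mul_le_mul_left _ h
    have : M * (p + 1) = M * p + M := by ring
    simp only [h, true_or, iff_true]
    omega
  · subst h
    simp
  · have : M * (q + 1) ≤ M * p := Nat.mul_le_mul_left _ h
    have : M * (q + 1) = M * q + M := by ring
    constructor
    · omega
    · omega

lemma add_mul_eq_iff {M a b p q : ℕ} (ha : a < M) (hb : b < M) :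
    a + M * p = b + M * q ↔ p = q ∧ a = b := by
  have h1 := add_mul_lt_iff (p := p) (q := q) ha hb
  have h2 := add_mul_lt_iff (p := q) (q := p) hb ha
  omega

lemma descents_add_two (k : ℕ) (σ : ℕ → ℕ) :
    descents (k + 2) σ = descents (k + 1) σ + if σ (k + 2) < σ (k + 1) then 1 else 0 := by
  unfold descents
  have h : Finset.Icc 1 (k + 2 - 1) = insert (k + 1) (Finset.Icc 1 (k + 1 - 1)) := by
    ext x
    simp only [Finset.mem_Icc, Finset.mem_insert]
    omega
  rw [h, Finset.filter_insert]
  split_ifs with h1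
  · rw [Finset.card_insert_of_notMem (by simp)]
  · rfl

lemma descents_le_key {n : ℕ} {σ K : ℕ → ℕ}
    (h : ∀ s, 1 ≤ s → s + 1 ≤ n → K s < K (s + 1) ∨ (K s = K (s + 1) ∧ σ s < σ (s + 1)))
    (k : ℕ) (hk : k + 1 ≤ n) : descents (k + 1) σ ≤ K (k + 1) := by
  induction k with
  | zero => simp [descents]
  | succ k ih =>
    have h1 := ih (by omega)
    have h2 := h (k + 1) (by omega) (by omega)
    rw [descents_add_two]
    simp only [Nat.add_assoc, Nat.reduceAdd] at h2 ⊢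
    split_ifs <;> omega

/-- The composite of `t` rounds is a single round with fewer than `m 1 * ⋯ * m t` piles. -/
lemma exists_key {n T : ℕ} {m : ℕ → ℕ} {P σs : ℕ → ℕ → ℕ}
    (hP : ∀ t ∈ Finset.Icc 1 T, ∀ s ∈ Finset.Icc 1 n, P t s < m t)
    (hQ : ∀ t ∈ Finset.Icc 1 T, QShuffle n (P t) (σs (t - 1)) (σs t)) (t : ℕ) (ht : t ≤ T) :
    ∃ K : ℕ → ℕ, (∀ s ∈ Finset.Icc 1 n, K s < ∏ i ∈ Finset.Icc 1 t, m i) ∧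
      QShuffle n K (σs 0) (σs t) := by
  induction t with
  | zero => exact ⟨fun _ => 0, by simp, by simp [QShuffle]⟩
  | succ t ih =>
    obtain ⟨K, hK, hKQ⟩ := ih (by omega)
    have hmem : t + 1 ∈ Finset.Icc 1 T := by simp; omega
    refine ⟨fun s => K s + (∏ i ∈ Finset.Icc 1 t, m i) * P (t + 1) s, ?_, ?_⟩
    · intro s hs
      rw [Finset.prod_Icc_succ_top (by omega)]
      have h1 : (∏ i ∈ Finset.Icc 1 t, m i) * (P (t + 1) s + 1) ≤
          (∏ i ∈ Finset.Icc 1 t, m i) * m (t + 1) := Nat.mul_le_mul_left _ (hP _ hmem s hs)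
      have h2 := hK s hs
      rw [Nat.mul_add] at h1
      show K s + _ < _
      omega
    · intro s hs u hu
      rw [hQ _ hmem s hs u hu, Nat.add_sub_cancel, hKQ s hs u hu]
      simp only [add_mul_lt_iff (hK s hs) (hK u hu), add_mul_eq_iff (hK s hs) (hK u hu)]
      tauto

/-- The rank of `s` among the elements of `[n]` ordered by `f`, counted from `1`. -/
def rankOn (n : ℕ) (f : ℕ → ℕ) (s : ℕ) : ℕ :=
  ((Finset.Icc 1 n).filter (fun u => f u ≤ f s)).card

lemma rankOn_lt_iff {n : ℕ} {f : ℕ → ℕ} {s t : ℕ} (ht : t ∈ Finset.Icc 1 n) :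
    rankOn n f s < rankOn n f t ↔ f s < f t := by
  constructor
  · intro h
    by_contra! hle
    refine absurd h (not_lt.mpr (Finset.card_le_card ?_))
    intro u hu
    simp only [Finset.mem_filter] at hu ⊢
    exact ⟨hu.1, hu.2.trans hle⟩
  · intro h
    apply Finset.card_lt_card
    rw [Finset.ssubset_iff_of_subset]
    · exact ⟨t, by simpa using ht, by simp [h]⟩
    · intro u hu
      simp only [Finset.mem_filter] at hu ⊢
      exact ⟨hu.1, hu.2.trans h.le⟩

lemma rankOn_bijOn {n : ℕ} {f : ℕ → ℕ} (hf : Set.InjOn f (Set.Icc 1 n)) :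
    Set.BijOn (rankOn n f) (Set.Icc 1 n) (Set.Icc 1 n) := by
  have hmaps : Set.MapsTo (rankOn n f) (Set.Icc 1 n) (Set.Icc 1 n) := by
    intro s hs
    constructor
    · exact Finset.card_pos.mpr ⟨s, by simpa using hs⟩
    · exact (Finset.card_filter_le _ _).trans (by simp)
  have hinj : Set.InjOn (rankOn n f) (Set.Icc 1 n) := by
    intro s hs t ht h
    apply hf hs ht
    have h1 := rankOn_lt_iff (f := f) (s := s) (Finset.mem_Icc.mpr ht)
    have h2 := rankOn_lt_iff (f := f) (s := t) (Finset.mem_Icc.mpr hs)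
    omega
  refine ⟨hmaps, hinj, ?_⟩
  have := Finset.surjOn_of_injOn_of_card_le (s := Finset.Icc 1 n) (t := Finset.Icc 1 n)
    (rankOn n f) (by simpa using hmaps) (by simpa using hinj) le_rfl
  simpa using this

lemma rankOn_eq_self {n : ℕ} {f : ℕ → ℕ} (hf : StrictMonoOn f (Set.Icc 1 n)) {s : ℕ}
    (hs : s ∈ Finset.Icc 1 n) : rankOn n f s = s := by
  have : (Finset.Icc 1 n).filter (fun u => f u ≤ f s) = Finset.Icc 1 s := by
    ext u
    simp only [Finset.mem_filter, Finset.mem_Icc] at hs ⊢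
    constructor
    · rintro ⟨hu, h⟩
      exact ⟨hu.1, (hf.le_iff_le hu hs).mp h⟩
    · rintro ⟨h1, h2⟩
      have hu : u ∈ Set.Icc 1 n := ⟨h1, h2.trans hs.2⟩
      exact ⟨hu, (hf.le_iff_le hu hs).mpr h2⟩
  rw [rankOn, this]
  simp

theorem stmt_15 (n T : ℕ) (hn : 1 ≤ n) (hT : 1 ≤ T)
    (m : ℕ → ℕ) (hm : ∀ t ∈ Finset.Icc 1 T, 1 ≤ m t)
    (σ : ℕ → ℕ) (hσ : Set.BijOn σ (Set.Icc 1 n) (Set.Icc 1 n)) :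
    (∃ (P : ℕ → ℕ → ℕ) (σs : ℕ → ℕ → ℕ),
      σs 0 = σ ∧
      (∀ t ∈ Finset.Icc 1 T,
        Set.BijOn (σs t) (Set.Icc 1 n) (Set.Icc 1 n)) ∧
      (∀ t ∈ Finset.Icc 1 T, ∀ s ∈ Finset.Icc 1 n, P t s < m t) ∧
      (∀ t ∈ Finset.Icc 1 T, QShuffle n (P t) (σs (t - 1)) (σs t)) ∧
      (∀ s ∈ Finset.Icc 1 n, σs T s = s)) ↔
    ascRuns n σ ≤ ∏ t ∈ Finset.Icc 1 T, m t := by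
  obtain ⟨k, rfl⟩ : ∃ k, n = k + 1 := ⟨n - 1, by omega⟩
  constructor
  · rintro ⟨P, σs, h0, -, hP, hQ, hid⟩
    obtain ⟨K, hK, hKQ⟩ := exists_key hP hQ T le_rfl
    have h1 : descents (k + 1) σ ≤ K (k + 1) := by
      apply descents_le_key (n := k + 1) _ k le_rfl
      intro s hs1 hs2
      have ha : s ∈ Finset.Icc 1 (k + 1) := by simp; omega
      have hb : s + 1 ∈ Finset.Icc 1 (k + 1) := by simp; omega
      rw [← h0, ← hKQ s ha _ hb, hid s ha, hid _ hb]
      omega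
    have h2 := hK (k + 1) (by simp)
    unfold ascRuns
    omega
  · intro hasc
    set M : ℕ → ℕ := fun t => ∏ i ∈ Finset.Icc 1 t, m i with hM
    have hMsucc : ∀ t, M (t + 1) = M t * m (t + 1) := fun t =>
      Finset.prod_Icc_succ_top (by omega) _
    have hMpos : ∀ t ≤ T, 0 < M t := fun t ht =>
      Finset.prod_pos fun i hi => hm i (by simp at hi ⊢; omega)
    -- `K s` counts the descents before `s`; at time `t` the cards are ordered by
    -- `(K s % M t, σ s)`, encoded as the single number `f t s` in base `k + 2`.
    set K : ℕ → ℕ := fun s => descents s σ with hKdef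
    set f : ℕ → ℕ → ℕ := fun t s => σ s + (k + 2) * (K s % M t) with hf
    have hσlt : ∀ s ∈ Finset.Icc 1 (k + 1), σ s < k + 2 := fun s hs => by
      have := (hσ.mapsTo (Finset.mem_Icc.mp hs)).2
      omega
    have hfinj : ∀ t, Set.InjOn (f t) (Set.Icc 1 (k + 1)) := fun t s hs u hu h =>
      hσ.injOn hs hu ((add_mul_eq_iff (hσlt s (Finset.mem_Icc.mpr hs))
        (hσlt u (Finset.mem_Icc.mpr hu))).mp h).2
    have hKstep : ∀ j, K (j + 1) ≤ K (j + 2) := fun j => by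
      simp only [hKdef]
      rw [descents_add_two]
      omega
    have hKlt : ∀ s ∈ Finset.Icc 1 (k + 1), K s < M T := by
      intro s hs
      have hmono : Monotone fun j => K (j + 1) := monotone_nat_of_le_succ hKstep
      obtain ⟨h1, h2⟩ := Finset.mem_Icc.mp hs
      have h3 : K (s - 1 + 1) ≤ K (k + 1) := hmono (show s - 1 ≤ k by omega)
      rw [Nat.sub_add_cancel h1] at h3
      have h4 : 1 + K (k + 1) ≤ M T := hasc
      omega
    have hfmono : StrictMonoOn (f T) (Set.Icc 1 (k + 1)) := by
      refine strictMonoOn_of_lt_add_one Set.ordConnected_Icc ?_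
      intro s _ hs hs'
      have ha := Finset.mem_Icc.mpr hs
      have hb := Finset.mem_Icc.mpr hs'
      simp only [hf]
      rw [add_mul_lt_iff (hσlt _ ha) (hσlt _ hb), Nat.mod_eq_of_lt (hKlt _ ha),
        Nat.mod_eq_of_lt (hKlt _ hb)]
      obtain ⟨j, rfl⟩ : ∃ j, s = j + 1 := ⟨s - 1, by have := hs.1; omega⟩
      have hne : σ (j + 1) ≠ σ (j + 1 + 1) := fun h => by
        have := hσ.injOn hs hs' h
        omega
      have hd := descents_add_two j σ
      simp only [hKdef]
      simp only [Nat.add_assoc, Nat.reduceAdd] at hne ⊢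
      split_ifs at hd <;> omega
    set σs : ℕ → ℕ → ℕ := fun t => if t = 0 then σ else rankOn (k + 1) (f t) with hσs
    have hσsQ : ∀ t, QShuffle (k + 1) (fun s => K s % M t) σ (σs t) := by
      intro t s hs u hu
      rcases Nat.eq_zero_or_pos t with rfl | ht
      · simp [hσs, hM, Nat.mod_one]
      · simp only [hσs, ht.ne', if_false]
        rw [rankOn_lt_iff hu]
        exact add_mul_lt_iff (hσlt s hs) (hσlt u hu)
    refine ⟨fun t s => K s / M (t - 1) % m t, σs, by simp [hσs], ?_, ?_, ?_, ?_⟩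
    · intro t ht
      have : t ≠ 0 := by simp at ht; omega
      simp only [hσs, this, if_false]
      exact rankOn_bijOn (hfinj t)
    · intro t ht s _
      exact Nat.mod_lt _ (hm t ht)
    · intro t ht s hs u hu
      obtain ⟨t, rfl⟩ : ∃ j, t = j + 1 := ⟨t - 1, by simp at ht; omega⟩
      have hp : 0 < M t := hMpos t (by simp at ht; omega)
      rw [hσsQ (t + 1) s hs u hu]
      simp only [Nat.add_sub_cancel]
      rw [hσsQ t s hs u hu, hMsucc, Nat.mod_mul, Nat.mod_mul,
        add_mul_lt_iff (Nat.mod_lt _ hp) (Nat.mod_lt _ hp),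
        add_mul_eq_iff (Nat.mod_lt _ hp) (Nat.mod_lt _ hp)]
      tauto
    · intro s hs
      have : T ≠ 0 := by omega
      simp only [hσs, this, if_false]
      exact rankOn_eq_self hfmono hs
end

section
/- Let n ≥ 1 and T ≥ 1, let m_1, …, m_T ≥ 1, and let σ be a permutation of [n]. There exist pile assignments P_t : [n] → {0, 1, …, m_t − 1} and permutations σ_0 = σ, σ_1, …, σ_T of [n] with SShuffle(P_t, σ_{t−1}) = σ_t for each t ∈ [T] and σ_T equal to the identity permutation, if and only if either T is even and ascruns(σ) ≤ ∏_{t=1}^{T} m_t, or T is odd and descruns(σ) ≤ ∏_{t=1}^{T} m_t. -/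
/-!
Unfolding the rounds, the order of the final deck compares `P_T` first, then `P_{T-1}` reversed, then
`P_{T-2}`, and so on with alternating directions, ties being broken by `σ` (`T` even) or by `σ`
reversed (`T` odd). Reading `P_T, P_{T-1}, …` (every second digit complemented) as the digits of a
mixed-radix number merges all rounds into one label `Q s < ∏ m_t`: the reachable decks `τ` are exactly
those ordered lexicographically by `(Q, (-1)^T σ)` for some such `Q` (`exists_label_of_shuffles`,
`exists_shuffles_of_label`; the digit computation is `lexRep_iff_sshuffle`).

The identity is ordered by `(Q, ρ)` if and only if `Q` is weakly increasing and increases strictly at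
each descent of `ρ`; the least such `Q` counts the descents to the left, so a `Q` below `M` exists iff
`1 + desc ρ ≤ M` (`exists_label_id_iff`). For `ρ = (-1)^T σ` this is the claimed bound.
-/


/-- `SShuffle(P, σ) = σ'`: a single round of pile shuffle on stacks with
assignments `P` transforms `σ` into `σ'`: for all `s, t ∈ [n]`,
`σ' s < σ' t` iff `P s < P t`, or `P s = P t` and `σ s > σ t`. -/
def SShuffle (n : ℕ) (P σ σ' : ℕ → ℕ) : Prop :=
  ∀ s ∈ Finset.Icc 1 n, ∀ t ∈ Finset.Icc 1 n,
    (σ' s < σ' t ↔ P s < P t ∨ (P s = P t ∧ σ t < σ s))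

/-- On `[n]`, the order of the values of `τ` is the lexicographic order of the pairs `(Q, ρ)`. -/
def LexRep (n : ℕ) (Q : ℕ → ℕ) (ρ : ℕ → ℤ) (τ : ℕ → ℕ) : Prop :=
  ∀ s ∈ Finset.Icc 1 n, ∀ t ∈ Finset.Icc 1 n,
    (τ s < τ t ↔ Q s < Q t ∨ (Q s = Q t ∧ ρ s < ρ t))

/-- The number of descents of `ρ` at positions in `[1, s)`. -/
def descBelow (ρ : ℕ → ℤ) (s : ℕ) : ℕ :=
  ∑ i ∈ Finset.Ico 1 s, if ρ (i + 1) < ρ i then 1 else 0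

lemma descBelow_succ (ρ : ℕ → ℤ) {s : ℕ} (hs : 1 ≤ s) :
    descBelow ρ (s + 1) = descBelow ρ s + if ρ (s + 1) < ρ s then 1 else 0 :=
  Finset.sum_Ico_succ_top hs _

lemma descBelow_mono (ρ : ℕ → ℤ) : Monotone (descBelow ρ) := fun _ _ h =>
  Finset.sum_le_sum_of_subset (Finset.Ico_subset_Ico_right h)

lemma digits_lt_iff {M a b x y : ℕ} (hx : x < M) (hy : y < M) :
    a * M + x < b * M + y ↔ a < b ∨ (a = b ∧ x < y) := by
  rcases lt_trichotomy a b with h | rfl | h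
  · have : (a + 1) * M ≤ b * M := Nat.mul_le_mul_right M h
    rw [add_mul] at this
    constructor <;> intro <;> omega
  · simp
  · have : (b + 1) * M ≤ a * M := Nat.mul_le_mul_right M h
    rw [add_mul] at this
    constructor <;> intro <;> omega

lemma digits_eq_iff {M a b x y : ℕ} (hx : x < M) (hy : y < M) :
    a * M + x = b * M + y ↔ a = b ∧ x = y := by
  have h1 := digits_lt_iff (a := a) (b := b) hx hy
  have h2 := digits_lt_iff (a := b) (b := a) hy hx
  omega

/-- Shuffling a deck with label `Q'` according to `P` amounts to prepending the digit `P` to the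
complement of `Q'` and reversing the tie-breaking order. -/
lemma lexRep_iff_sshuffle {n M : ℕ} {P Q Q' τ τ' : ℕ → ℕ} {ρ : ℕ → ℤ}
    (hQ' : ∀ s ∈ Finset.Icc 1 n, Q' s < M)
    (hQ : ∀ s ∈ Finset.Icc 1 n, Q s = P s * M + (M - 1 - Q' s))
    (h : LexRep n Q' ρ τ') :
    LexRep n Q (fun s => -ρ s) τ ↔ SShuffle n P τ' τ := by
  refine forall₂_congr fun s hs => forall₂_congr fun t ht => ?_
  have hs' := hQ' s hs
  have ht' := hQ' t ht
  have := h t ht s hs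
  rw [hQ s hs, hQ t ht, digits_lt_iff (by omega) (by omega), digits_eq_iff (by omega) (by omega)]
  dsimp only
  omega

/-- The rank of `s` among `[n]` with respect to the key `k`. -/
def rankOf (n : ℕ) (k : ℕ → ℕ ×ₗ ℤ) (s : ℕ) : ℕ :=
  ((Finset.Icc 1 n).filter (fun u => k u ≤ k s)).card

lemma rankOf_lt {n : ℕ} {k : ℕ → ℕ ×ₗ ℤ} {s t : ℕ} (ht : t ∈ Finset.Icc 1 n) (h : k s < k t) :
    rankOf n k s < rankOf n k t := by
  refine Finset.card_lt_card (Finset.ssubset_iff_of_subset ?_ |>.2 ⟨t, ?_, ?_⟩)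
  · intro u hu
    simp only [Finset.mem_filter] at hu ⊢
    exact ⟨hu.1, hu.2.trans h.le⟩
  · simpa using ht
  · simp [h]

/-- Any pair `(Q, ρ)` with `ρ` injective is realized by a permutation, namely the rank function of the
lexicographic order. -/
lemma exists_lexRep {n : ℕ} (Q : ℕ → ℕ) {ρ : ℕ → ℤ} (hρ : Set.InjOn ρ (Set.Icc 1 n)) :
    ∃ τ : ℕ → ℕ, Set.BijOn τ (Set.Icc 1 n) (Set.Icc 1 n) ∧ LexRep n Q ρ τ := by
  let k : ℕ → ℕ ×ₗ ℤ := fun s => toLex (Q s, ρ s)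
  have hk : ∀ s t, k s < k t ↔ Q s < Q t ∨ (Q s = Q t ∧ ρ s < ρ t) := fun s t => by
    simp [k, Prod.Lex.toLex_lt_toLex]
  have hlt : ∀ s ∈ Finset.Icc 1 n, ∀ t ∈ Finset.Icc 1 n,
      (rankOf n k s < rankOf n k t ↔ k s < k t) := fun s hs t ht =>
    ⟨fun h => by
      by_contra hle
      rcases (not_lt.1 hle).lt_or_eq with h' | h'
      · exact lt_asymm h (rankOf_lt hs h')
      · simp [rankOf, h'] at h, rankOf_lt ht⟩
  have hmaps : Set.MapsTo (rankOf n k) (Set.Icc 1 n) (Set.Icc 1 n) := fun s hs =>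
    ⟨Finset.card_pos.2 ⟨s, by simpa using hs⟩, (Finset.card_filter_le _ _).trans (by simp)⟩
  have hinj : Set.InjOn (rankOf n k) (Set.Icc 1 n) := by
    intro s hs t ht h
    have h1 := hlt s (by simpa using hs) t (by simpa using ht)
    have h2 := hlt t (by simpa using ht) s (by simpa using hs)
    rw [hk] at h1 h2
    exact hρ hs ht (by omega)
  refine ⟨rankOf n k, ⟨hmaps, hinj, ?_⟩, fun s hs t ht => (hlt s hs t ht).trans (hk s t)⟩
  have := Finset.surjOn_of_injOn_of_card_le (s := Finset.Icc 1 n) (t := Finset.Icc 1 n)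
    (rankOf n k) (by simpa using hmaps) (by simpa using hinj) le_rfl
  simpa using this

lemma card_le_of_bijOn {n : ℕ} {τ : ℕ → ℕ} (hτ : Set.BijOn τ (Set.Icc 1 n) (Set.Icc 1 n))
    {s : ℕ} (hs : s ∈ Finset.Icc 1 n) :
    ((Finset.Icc 1 n).filter (fun u => τ u ≤ τ s)).card = τ s := by
  have hle : τ s ≤ n := (hτ.mapsTo (by simpa using hs)).2
  have himg : ((Finset.Icc 1 n).filter (fun u => τ u ≤ τ s)).image τ = Finset.Icc 1 (τ s) := by
    ext v
    simp only [Finset.mem_image, Finset.mem_filter, Finset.mem_Icc]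
    constructor
    · rintro ⟨u, ⟨hu, huv⟩, rfl⟩
      exact ⟨(hτ.mapsTo hu).1, huv⟩
    · rintro ⟨h1, h2⟩
      obtain ⟨u, hu, rfl⟩ := hτ.surjOn (show v ∈ Set.Icc 1 n from ⟨h1, h2.trans hle⟩)
      exact ⟨u, ⟨hu, h2⟩, rfl⟩
  rw [← Finset.card_image_of_injOn (f := τ), himg, Nat.card_Icc, Nat.add_sub_cancel]
  refine hτ.injOn.mono fun u hu => ?_
  simp only [Finset.coe_filter, Set.mem_ofPred_eq, Finset.mem_Icc] at hu
  exact hu.1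

/-- A permutation of `[n]` is determined by the order of its values. -/
lemma eqOn_of_bijOn {n : ℕ} {τ τ' : ℕ → ℕ} (hτ : Set.BijOn τ (Set.Icc 1 n) (Set.Icc 1 n))
    (hτ' : Set.BijOn τ' (Set.Icc 1 n) (Set.Icc 1 n))
    (h : ∀ s ∈ Finset.Icc 1 n, ∀ t ∈ Finset.Icc 1 n, (τ s < τ t ↔ τ' s < τ' t)) :
    ∀ s ∈ Finset.Icc 1 n, τ s = τ' s := by
  intro s hs
  rw [← card_le_of_bijOn hτ hs, ← card_le_of_bijOn hτ' hs]
  congr 1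
  refine Finset.filter_congr fun u hu => ?_
  rw [← not_lt, ← not_lt, h s hs u hu]

lemma neg_one_pow_succ_mul (σ : ℕ → ℕ) (T : ℕ) :
    (fun s => (-1 : ℤ) ^ (T + 1) * σ s) = fun s => -((-1 : ℤ) ^ T * σ s) := by
  funext s
  ring

lemma injOn_signed {n : ℕ} {σ : ℕ → ℕ} (hσ : Set.InjOn σ (Set.Icc 1 n)) (T : ℕ) :
    Set.InjOn (fun s => (-1 : ℤ) ^ T * σ s) (Set.Icc 1 n) := by
  intro s hs t ht h
  exact hσ hs ht (by simpa using h)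

/-- The pile assignments of `T` rounds merge into one mixed-radix label that, with the tie-breaking
sign `(-1)^T`, determines the order of the final deck. -/
lemma exists_label_of_shuffles {n : ℕ} {m : ℕ → ℕ} {P σs : ℕ → ℕ → ℕ} (T : ℕ)
    (hP : ∀ t ∈ Finset.Icc 1 T, ∀ s ∈ Finset.Icc 1 n, P t s < m t)
    (hS : ∀ t ∈ Finset.Icc 1 T, SShuffle n (P t) (σs (t - 1)) (σs t)) :
    ∃ Q : ℕ → ℕ, (∀ s ∈ Finset.Icc 1 n, Q s < ∏ t ∈ Finset.Icc 1 T, m t) ∧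
      LexRep n Q (fun s => (-1 : ℤ) ^ T * σs 0 s) (σs T) := by
  induction T with
  | zero => exact ⟨fun _ => 0, by simp, fun s _ t _ => by simp⟩
  | succ T ih =>
    have hsub : Finset.Icc 1 T ⊆ Finset.Icc 1 (T + 1) := Finset.Icc_subset_Icc_right (by omega)
    obtain ⟨Q', hQ', hL⟩ := ih (fun t ht => hP t (hsub ht)) (fun t ht => hS t (hsub ht))
    set M := ∏ t ∈ Finset.Icc 1 T, m t with hM
    have hT : T + 1 ∈ Finset.Icc 1 (T + 1) := by simp
    refine ⟨fun s => P (T + 1) s * M + (M - 1 - Q' s), fun s hs => ?_, ?_⟩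
    · rw [Finset.prod_Icc_succ_top (by omega), ← hM]
      have h1 : (P (T + 1) s + 1) * M ≤ m (T + 1) * M := Nat.mul_le_mul_right M (hP _ hT s hs)
      have h2 := hQ' s hs
      rw [add_mul] at h1
      rw [mul_comm M]
      dsimp only
      omega
    · rw [neg_one_pow_succ_mul]
      exact (lexRep_iff_sshuffle hQ' (fun _ _ => rfl) hL).2 (hS _ hT)

/-- A label below `∏ m_t` splits into pile assignments for `T` rounds leading from `σ` to `τ`. -/
lemma exists_shuffles_of_label {n : ℕ} {m σ : ℕ → ℕ}
    (hσ : Set.BijOn σ (Set.Icc 1 n) (Set.Icc 1 n)) (T : ℕ)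
    (hm : ∀ t ∈ Finset.Icc 1 T, 1 ≤ m t) {Q τ : ℕ → ℕ}
    (hτ : Set.BijOn τ (Set.Icc 1 n) (Set.Icc 1 n))
    (hQ : ∀ s ∈ Finset.Icc 1 n, Q s < ∏ t ∈ Finset.Icc 1 T, m t)
    (hL : LexRep n Q (fun s => (-1 : ℤ) ^ T * σ s) τ) :
    ∃ (P : ℕ → ℕ → ℕ) (σs : ℕ → ℕ → ℕ),
      σs 0 = σ ∧
      (∀ t ∈ Finset.Icc 1 T, Set.BijOn (σs t) (Set.Icc 1 n) (Set.Icc 1 n)) ∧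
      (∀ t ∈ Finset.Icc 1 T, ∀ s ∈ Finset.Icc 1 n, P t s < m t) ∧
      (∀ t ∈ Finset.Icc 1 T, SShuffle n (P t) (σs (t - 1)) (σs t)) ∧
      (∀ s ∈ Finset.Icc 1 n, σs T s = τ s) := by
  induction T generalizing Q τ with
  | zero =>
    refine ⟨fun _ _ => 0, fun _ => σ, rfl, by simp, by simp, by simp, ?_⟩
    change ∀ s ∈ Finset.Icc 1 n, σ s = τ s
    refine eqOn_of_bijOn hσ hτ fun s hs t ht => ?_
    have h1 := hQ s hs
    have h2 := hQ t ht
    have h3 := hL s hs t ht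
    simp only [Finset.Icc_eq_empty_of_lt zero_lt_one, Finset.prod_empty, pow_zero, one_mul] at h1 h2 h3
    omega
  | succ T ih =>
    have hsub : Finset.Icc 1 T ⊆ Finset.Icc 1 (T + 1) := Finset.Icc_subset_Icc_right (by omega)
    have hm' : ∀ t ∈ Finset.Icc 1 T, 1 ≤ m t := fun t ht => hm t (hsub ht)
    rw [Finset.prod_Icc_succ_top (by omega)] at hQ
    set M := ∏ t ∈ Finset.Icc 1 T, m t with hM
    have hMpos : 0 < M := Finset.prod_pos hm'
    -- The leading digit `Q / M` is the last pile assignment; the complement of the remaining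
    -- digits labels the deck before the last round.
    have hQ'lt : ∀ s ∈ Finset.Icc 1 n, M - 1 - Q s % M < M := fun s _ => by omega
    obtain ⟨τ', hτ', hL'⟩ := exists_lexRep (fun s => M - 1 - Q s % M) (injOn_signed hσ.injOn T)
    obtain ⟨P, σs, h0, hB, hP, hS, hend⟩ := ih hm' hτ' hQ'lt hL'
    have hround : SShuffle n (fun s => Q s / M) τ' τ := by
      rw [neg_one_pow_succ_mul] at hL
      refine (lexRep_iff_sshuffle hQ'lt (fun s _ => ?_) hL').1 hL
      have := Nat.mod_lt (Q s) hMpos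
      have := Nat.div_add_mod' (Q s) M
      omega
    have hcase : ∀ t ∈ Finset.Icc 1 (T + 1), t = T + 1 ∨ (t ∈ Finset.Icc 1 T ∧ t ≠ T + 1 ∧
        t - 1 ≠ T + 1) := fun t ht => by
      simp only [Finset.mem_Icc] at ht ⊢
      omega
    refine ⟨Function.update P (T + 1) (fun s => Q s / M), Function.update σs (T + 1) τ,
      ?_, ?_, ?_, ?_, ?_⟩
    · rw [Function.update_of_ne (by omega), h0]
    · intro t ht
      rcases hcase t ht with rfl | ⟨h1, h2, h3⟩
      · simpa using hτ
      · simpa [h2] using hB t h1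
    · intro t ht s hs
      rcases hcase t ht with rfl | ⟨h1, h2, h3⟩
      · simpa using Nat.div_lt_of_lt_mul (hQ s hs)
      · simpa [h2] using hP t h1 s hs
    · intro t ht
      rcases hcase t ht with rfl | ⟨h1, h2, h3⟩
      · intro s hs t ht
        simpa [hend s hs, hend t ht] using hround s hs t ht
      · simpa [h2, h3] using hS t h1
    · simp

/-- A label ordering the identity dominates `descBelow ρ`, which is itself such a label. -/
lemma exists_label_id_iff {n M : ℕ} (hn : 1 ≤ n) {ρ : ℕ → ℤ} (hρ : Set.InjOn ρ (Set.Icc 1 n)) :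
    (∃ Q : ℕ → ℕ, (∀ s ∈ Finset.Icc 1 n, Q s < M) ∧ LexRep n Q ρ id) ↔
      1 + descBelow ρ n ≤ M := by
  constructor
  · rintro ⟨Q, hQ, hL⟩
    have key : ∀ s, 1 ≤ s → s ≤ n → descBelow ρ s ≤ Q s := by
      intro s hs
      induction s, hs using Nat.le_induction with
      | base => simp [descBelow]
      | succ s hs ih =>
        intro hsn
        have h1 := ih (by omega)
        have h2 := hL s (by simp; omega) (s + 1) (by simp; omega)
        simp only [id] at h2
        rw [descBelow_succ ρ hs]
        split_ifs <;> omega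
    have h1 := key n hn le_rfl
    have h2 := hQ n (by simp; omega)
    omega
  · intro h
    refine ⟨descBelow ρ, fun s hs => ?_, ?_⟩
    · have := descBelow_mono ρ (Finset.mem_Icc.1 hs).2
      omega
    · have key : ∀ s t, 1 ≤ s → s + 1 ≤ t → t ≤ n →
          descBelow ρ s < descBelow ρ t ∨ (descBelow ρ s = descBelow ρ t ∧ ρ s < ρ t) := by
        have hne : ∀ s, 1 ≤ s → s + 1 ≤ n → ρ s ≠ ρ (s + 1) := fun s h1 h2 he => by
          have := hρ (show s ∈ Set.Icc 1 n from ⟨h1, by omega⟩)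
            (show s + 1 ∈ Set.Icc 1 n from ⟨by omega, h2⟩) he
          omega
        intro s t hs hst
        induction t, hst using Nat.le_induction with
        | base =>
          intro hn
          have := hne s hs hn
          rw [descBelow_succ ρ hs]
          split_ifs <;> omega
        | succ t ht ih =>
          intro hn
          have := hne t (by omega) hn
          have := ih (by omega)
          rw [descBelow_succ ρ (by omega : 1 ≤ t)]
          split_ifs <;> omega
      intro s hs t ht
      rw [Finset.mem_Icc] at hs ht
      simp only [id]
      rcases lt_trichotomy s t with h | rfl | h
      · simpa [h] using key s t hs.1 h ht.2
      · simp
      · have := key t s ht.1 h hs.2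
        omega

lemma ascRuns_eq {n T : ℕ} (hn : 1 ≤ n) (σ : ℕ → ℕ) (hT : Even T) :
    1 + descBelow (fun s => (-1 : ℤ) ^ T * σ s) n = ascRuns n σ := by
  have : Finset.Icc 1 (n - 1) = Finset.Ico 1 n := by
    ext; simp only [Finset.mem_Icc, Finset.mem_Ico]; omega
  simp [ascRuns, descents, descBelow, hT.neg_one_pow, this]

lemma descRuns_eq {n T : ℕ} (hn : 1 ≤ n) (σ : ℕ → ℕ) (hT : Odd T) :
    1 + descBelow (fun s => (-1 : ℤ) ^ T * σ s) n = descRuns n σ := by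
  have : Finset.Icc 1 (n - 1) = Finset.Ico 1 n := by
    ext; simp only [Finset.mem_Icc, Finset.mem_Ico]; omega
  simp [descRuns, ascents, descBelow, hT.neg_one_pow, this]

theorem stmt_17 (n T : ℕ) (hn : 1 ≤ n) (hT : 1 ≤ T)
    (m : ℕ → ℕ) (hm : ∀ t ∈ Finset.Icc 1 T, 1 ≤ m t)
    (σ : ℕ → ℕ) (hσ : Set.BijOn σ (Set.Icc 1 n) (Set.Icc 1 n)) :
    (∃ (P : ℕ → ℕ → ℕ) (σs : ℕ → ℕ → ℕ),
      σs 0 = σ ∧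
      (∀ t ∈ Finset.Icc 1 T,
        Set.BijOn (σs t) (Set.Icc 1 n) (Set.Icc 1 n)) ∧
      (∀ t ∈ Finset.Icc 1 T, ∀ s ∈ Finset.Icc 1 n, P t s < m t) ∧
      (∀ t ∈ Finset.Icc 1 T, SShuffle n (P t) (σs (t - 1)) (σs t)) ∧
      (∀ s ∈ Finset.Icc 1 n, σs T s = s)) ↔
    ((Even T ∧ ascRuns n σ ≤ ∏ t ∈ Finset.Icc 1 T, m t) ∨
     (Odd T ∧ descRuns n σ ≤ ∏ t ∈ Finset.Icc 1 T, m t)) := by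
  have hmain := exists_label_id_iff (M := ∏ t ∈ Finset.Icc 1 T, m t) hn (injOn_signed hσ.injOn T)
  have hruns : 1 + descBelow (fun s => (-1 : ℤ) ^ T * σ s) n ≤ ∏ t ∈ Finset.Icc 1 T, m t ↔
      ((Even T ∧ ascRuns n σ ≤ ∏ t ∈ Finset.Icc 1 T, m t) ∨
       (Odd T ∧ descRuns n σ ≤ ∏ t ∈ Finset.Icc 1 T, m t)) := by
    rcases Nat.even_or_odd T with h | h
    · rw [ascRuns_eq hn σ h]
      simp [h, Nat.not_odd_iff_even.2 h]
    · rw [descRuns_eq hn σ h]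
      simp [h, Nat.not_even_iff_odd.2 h]
  rw [← hruns, ← hmain]
  constructor
  · rintro ⟨P, σs, rfl, -, hP, hS, hend⟩
    obtain ⟨Q, hQ, hL⟩ := exists_label_of_shuffles T hP hS
    refine ⟨Q, hQ, fun s hs t ht => ?_⟩
    simpa [hend s hs, hend t ht] using hL s hs t ht
  · rintro ⟨Q, hQ, hL⟩
    exact exists_shuffles_of_label hσ T hm (Set.bijOn_id _) hQ hL
end

section
/- Let n ≥ 1 and T ≥ 1, let m_1, …, m_T ≥ 1, and for each t ∈ [T] let c_t : {0,…,m_t−1} → {0,1} be a type indicator and P_t : [n] → {0,…,m_t−1} a pile assignment. Let σ_0 = σ be a permutation of [n] and σ_1, …, σ_T permutations of [n] with Shuffle(c_t, P_t, σ_{t−1}) = σ_t for each t ∈ [T]. For y ∈ {0,…,m−1} define rev_m(y) = m − 1 − y, and rev_m^0 = id, rev_m^1 = rev_m. Define for each s ∈ [n]: the suffix parities f_{T+1}(s) = 0 and f_t(s) = (Σ_{t'=t}^{T} c_{t'}(P_{t'}(s))) mod 2; the design piles d_t(s) = rev_{m_t}^{f_{t+1}(s)}(P_t(s)); and the virtual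 assignment P̂_T(s) = d_T(s), P̂_t(s) = d_t(s) + m_t · P̂_{t+1}(s) for 1 ≤ t ≤ T−1. Let m̂_t = ∏_{t'=t}^{T} m_{t'}, and define virtual type indicators ĉ_t : {0,…,m̂_t−1} → {0,1} by ĉ_T = c_T, and for 1 ≤ t ≤ T−1, for all d ∈ {0,…,m_t−1} and q ∈ {0,…,m̂_{t+1}−1}: ĉ_t(d + m_t·q) = (c_t(rev_{m_t}^{ĉ_{t+1}(q)}(d)) + ĉ_{t+1}(q)) mod 2. Then Shuffle(ĉ_1, P̂_1, σ) = σ_T. -/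
/-!
Two consecutive pile shuffles amount to one. The later round dominates the order of the cards; two
cards sharing a pile `q` in the later round are compared by the earlier round, in reversed order when
`q` is a stack. Hence the composite pile is the pair (later pile, earlier pile) ordered
lexicographically, with the earlier pile index reversed when `q` is a stack, and the composite type is
the sum of the two types modulo 2 (`heteroShuffle_comp`). Encoding the pair as `d + m * q` preserves
the lexicographic order because `d < m`.

Descending induction on `t` then shows that rounds `t, …, T` together form the shuffle with data
`(ĉ_t, P̂_t)`. The induction also carries `ĉ_t (P̂_t s) = f_t s`, which identifies the design piles
with the reversed piles of the composition lemma, and the bound `P̂_t s < m̂_t`, which makes the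
recursion for `ĉ` applicable.
-/

/-- `Shuffle(c, P, σ) = σ'`: the heterogeneous pile shuffle with type
indicator `c` and pile assignments `P` transforms `σ` into `σ'`: for all
`s, t ∈ [n]`, `σ' s < σ' t` iff `P s < P t`, or `P s = P t` and
(`σ s < σ t` when `c (P s) = 0`, respectively `σ s > σ t` when `c (P s) = 1`). -/
def HeteroShuffle (n : ℕ) (c : ℕ → Fin 2) (P σ σ' : ℕ → ℕ) : Prop :=
  ∀ s ∈ Finset.Icc 1 n, ∀ t ∈ Finset.Icc 1 n,
    (σ' s < σ' t ↔ P s < P t ∨ (P s = P t ∧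
      (if c (P s) = 0 then σ s < σ t else σ t < σ s)))

/-- `revIter m k y` is `rev_m^k(y)` where `rev_m(y) = m − 1 − y` reverses
`{0, …, m−1}`: the identity for `k = 0` and `rev_m` for `k = 1`. -/
def revIter (m : ℕ) (k : Fin 2) (y : ℕ) : ℕ :=
  if k = 0 then y else m - 1 - y

theorem revIter_lt {m y : ℕ} (k : Fin 2) (h : y < m) : revIter m k y < m := by
  unfold revIter
  split_ifs <;> omega

theorem revIter_revIter {m y : ℕ} (k : Fin 2) (h : y < m) :
    revIter m k (revIter m k y) = y := by
  unfold revIter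
  split_ifs <;> omega

theorem add_mul_lt_add_mul_iff {m a b p q : ℕ} (ha : a < m) (hb : b < m) :
    a + m * p < b + m * q ↔ p < q ∨ (p = q ∧ a < b) := by
  rcases lt_trichotomy p q with h | rfl | h
  · have : m * (p + 1) ≤ m * q := Nat.mul_le_mul_left m h
    rw [Nat.mul_add] at this
    exact ⟨fun _ => Or.inl h, fun _ => by omega⟩
  · simp
  · have : m * (q + 1) ≤ m * p := Nat.mul_le_mul_left m h
    rw [Nat.mul_add] at this
    exact ⟨fun _ => by omega, fun _ => by omega⟩

theorem add_mul_eq_add_mul_iff {m a b p q : ℕ} (ha : a < m) (hb : b < m) :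
    a + m * p = b + m * q ↔ p = q ∧ a = b := by
  have h₁ := add_mul_lt_add_mul_iff (p := p) (q := q) ha hb
  have h₂ := add_mul_lt_add_mul_iff (p := q) (q := p) hb ha
  constructor
  · intro h
    omega
  · rintro ⟨rfl, rfl⟩
    rfl

/-- Composition of two pile shuffles: `(c, P)` with `m` piles, followed by `(C, Q)`. The composite
`(C', Q')` only needs to have the expected types on the piles that are used. -/
theorem heteroShuffle_comp {n m : ℕ} {c C C' : ℕ → Fin 2} {P Q Q' σ₀ σ₁ σ₂ : ℕ → ℕ}
    (hP : ∀ s ∈ Finset.Icc 1 n, P s < m)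
    (h₁ : HeteroShuffle n c P σ₀ σ₁) (h₂ : HeteroShuffle n C Q σ₁ σ₂)
    (hQ' : ∀ s ∈ Finset.Icc 1 n, Q' s = revIter m (C (Q s)) (P s) + m * Q s)
    (hC' : ∀ s ∈ Finset.Icc 1 n, C' (Q' s) = c (P s) + C (Q s)) :
    HeteroShuffle n C' Q' σ₀ σ₂ := by
  intro s hs t ht
  have hPs := hP s hs
  have hPt := hP t ht
  rw [h₂ s hs t ht, hC' s hs, hQ' s hs, hQ' t ht,
    add_mul_lt_add_mul_iff (revIter_lt _ hPs) (revIter_lt _ hPt),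
    add_mul_eq_add_mul_iff (revIter_lt _ hPs) (revIter_lt _ hPt), h₁ s hs t ht, h₁ t ht s hs]
  by_cases hq : Q s = Q t
  · rw [← hq]
    by_cases hp : P s = P t
    · rw [← hp]
      generalize C (Q s) = x
      generalize c (P s) = y
      fin_cases x <;> fin_cases y <;> simp
    · generalize C (Q s) = x
      fin_cases x <;> simp [revIter] <;> omega
  · simp [hq]

theorem stmt_18 (n T : ℕ) (hn : 1 ≤ n) (hT : 1 ≤ T)
    (m : ℕ → ℕ) (hm : ∀ t ∈ Finset.Icc 1 T, 1 ≤ m t)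
    -- per-round type indicators and pile assignments
    (c : ℕ → ℕ → Fin 2) (P : ℕ → ℕ → ℕ)
    (hP : ∀ t ∈ Finset.Icc 1 T, ∀ s ∈ Finset.Icc 1 n, P t s < m t)
    (σ : ℕ → ℕ) (hσ : Set.BijOn σ (Set.Icc 1 n) (Set.Icc 1 n))
    (σs : ℕ → ℕ → ℕ) (hσ0 : σs 0 = σ)
    (hσsbij : ∀ t ∈ Finset.Icc 1 T,
      Set.BijOn (σs t) (Set.Icc 1 n) (Set.Icc 1 n))
    (hrounds : ∀ t ∈ Finset.Icc 1 T,
      HeteroShuffle n (c t) (P t) (σs (t - 1)) (σs t))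
    -- suffix parities `f_t(s) = (Σ_{t'=t}^{T} c_{t'}(P_{t'}(s))) mod 2`
    (f : ℕ → ℕ → Fin 2)
    (hfT1 : ∀ s, f (T + 1) s = 0)
    (hf : ∀ t ∈ Finset.Icc 1 T, ∀ s,
      f t s = ∑ t' ∈ Finset.Icc t T, c t' (P t' s))
    -- design piles `d_t(s) = rev_{m_t}^{f_{t+1}(s)}(P_t(s))`
    (d : ℕ → ℕ → ℕ)
    (hd : ∀ t ∈ Finset.Icc 1 T, ∀ s,
      d t s = revIter (m t) (f (t + 1) s) (P t s))
    -- virtual pile assignments `P̂`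
    (Phat : ℕ → ℕ → ℕ)
    (hPhatT : ∀ s, Phat T s = d T s)
    (hPhatRec : ∀ t ∈ Finset.Icc 1 (T - 1), ∀ s,
      Phat t s = d t s + m t * Phat (t + 1) s)
    -- virtual pile counts `m̂_t = ∏_{t'=t}^{T} m_{t'}`
    (mhat : ℕ → ℕ)
    (hmhat : ∀ t, mhat t = ∏ t' ∈ Finset.Icc t T, m t')
    -- virtual type indicators `ĉ`
    (chat : ℕ → ℕ → Fin 2)
    (hchatT : ∀ q < m T, chat T q = c T q)
    (hchatRec : ∀ t ∈ Finset.Icc 1 (T - 1), ∀ dd < m t, ∀ q < mhat (t + 1),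
      chat t (dd + m t * q) =
        c t (revIter (m t) (chat (t + 1) q) dd) + chat (t + 1) q) :
    HeteroShuffle n (chat 1) (Phat 1) σ (σs T) := by
  -- the claim for rounds `t, …, T`, with `t = T - k`
  have key : ∀ k t, 1 ≤ t → t + k = T →
      HeteroShuffle n (chat t) (Phat t) (σs (t - 1)) (σs T) ∧
      ∀ s ∈ Finset.Icc 1 n, Phat t s < mhat t ∧ chat t (Phat t s) = f t s := by
    intro k
    induction k with
    | zero =>
      intro t ht htT
      obtain rfl : t = T := by omega
      have htm : t ∈ Finset.Icc 1 t := Finset.mem_Icc.2 ⟨ht, le_rfl⟩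
      have hPh : ∀ s, Phat t s = P t s := fun s => by
        rw [hPhatT, hd t htm, hfT1]
        simp [revIter]
      refine ⟨fun s hs u hu => ?_, fun s hs => ⟨?_, ?_⟩⟩
      · rw [hPh, hPh, hchatT _ (hP t htm s hs)]
        exact hrounds t htm s hs u hu
      · rw [hPh, hmhat]
        simpa using hP t htm s hs
      · rw [hPh, hchatT _ (hP t htm s hs), hf t htm]
        simp
    | succ k ih =>
      intro t ht htT
      obtain ⟨ihS, ihs⟩ := ih (t + 1) (by omega) (by omega)
      have htm : t ∈ Finset.Icc 1 T := Finset.mem_Icc.2 ⟨ht, by omega⟩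
      have htm' : t ∈ Finset.Icc 1 (T - 1) := Finset.mem_Icc.2 ⟨ht, by omega⟩
      have htm1 : t + 1 ∈ Finset.Icc 1 T := Finset.mem_Icc.2 ⟨by omega, by omega⟩
      have hIcc : Finset.Icc t T = insert t (Finset.Icc (t + 1) T) := by
        ext x
        simp only [Finset.mem_Icc, Finset.mem_insert]
        omega
      have hnot : t ∉ Finset.Icc (t + 1) T := by simp
      have hPh : ∀ s ∈ Finset.Icc 1 n, Phat t s =
          revIter (m t) (chat (t + 1) (Phat (t + 1) s)) (P t s) + m t * Phat (t + 1) s := by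
        intro s hs
        rw [hPhatRec t htm', hd t htm, (ihs s hs).2]
      have hch : ∀ s ∈ Finset.Icc 1 n,
          chat t (Phat t s) = c t (P t s) + chat (t + 1) (Phat (t + 1) s) := by
        intro s hs
        have hPs := hP t htm s hs
        rw [hPh s hs, hchatRec t htm' _ (revIter_lt _ hPs) _ (ihs s hs).1, revIter_revIter _ hPs]
      refine ⟨heteroShuffle_comp (hP t htm) (hrounds t htm) ihS hPh hch, fun s hs => ⟨?_, ?_⟩⟩
      · have hmt : mhat t = m t * mhat (t + 1) := by
          rw [hmhat, hmhat, hIcc, Finset.prod_insert hnot]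
        have hlt := revIter_lt (chat (t + 1) (Phat (t + 1) s)) (hP t htm s hs)
        have hle : m t * (Phat (t + 1) s + 1) ≤ m t * mhat (t + 1) :=
          Nat.mul_le_mul_left _ (ihs s hs).1
        rw [Nat.mul_add] at hle
        rw [hPh s hs, hmt]
        omega
      · rw [hch s hs, (ihs s hs).2, hf t htm, hf (t + 1) htm1, hIcc, Finset.sum_insert hnot]
  have h := (key (T - 1) 1 le_rfl (by omega)).1
  simpa [hσ0] using h
end
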